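/- Let (T, m) be a complete local equidimensional ring such that dim T ≥ 2, no integer of T is a zerodivisor in T, depth T > 1, and |T| = |T/m|. Let d be an integer such that 1 ≤ d ≤ dim T − 1, and assume that for every p ∈ Ass T, ht p ≤ d − 1, and that if z is a regular element of T and Q ∈ Ass(T/zT), then ht Q ≤ d. Then there exists a local unique factorization domain A such that the completion of A is T and, for every height one prime ideal pA of A, α(A,pA) = α(A,(0)) = d − 1. -/

import Mathlib

universe u

open IsLocalRing Cardinal

/-- The height of an ideal: infimum of heights of primes containing it. -/
noncomputable def idealHt {T : Type*} [CommRing T] (I : Ideal T) : ℕ∞ :=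
  ⨅ (p : PrimeSpectrum T) (_ : I ≤ p.asIdeal), Order.height p

/-- `T` is equidimensional: `dim (T/p) = dim T` for every minimal prime `p`. -/
def IsEquidim (T : Type*) [CommRing T] : Prop :=
  ∀ p ∈ minimalPrimes T, ringKrullDim (T ⧸ p) = ringKrullDim T

/-- `depth T > 1`: there is a regular sequence of length two inside the maximal ideal. -/
def DepthGTOne (T : Type*) [CommRing T] [IsLocalRing T] : Prop :=
  ∃ x y : T, x ∈ maximalIdeal T ∧ y ∈ maximalIdeal T ∧ x ∈ nonZeroDivisors T ∧
    Ideal.Quotient.mk (Ideal.span {x}) y ∈ nonZeroDivisors (T ⧸ Ideal.span {x})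

/-- A local (Noetherian) unique factorization domain `A` together with an identification
of its `maximalIdeal A`-adic completion with `T`. -/
structure LocalUFDWithCompletion (T : Type u) [CommRing T] : Type (u + 1) where
  /-- the underlying ring -/
  A : Type u
  [commRing : CommRing A]
  [isDomain : IsDomain A]
  [isNoetherian : IsNoetherianRing A]
  [isLocalRing : IsLocalRing A]
  [ufd : UniqueFactorizationMonoid A]
  /-- the natural map from `A` to its completion `T` -/
  toCompletion : A →+* T
  /-- the completion of `A` is `T` -/
  completionEquiv : AdicCompletion (IsLocalRing.maximalIdeal A) A ≃+* T
  completionEquiv_comp : ∀ a : A,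
    completionEquiv (algebraMap A (AdicCompletion (IsLocalRing.maximalIdeal A) A) a) =
      toCompletion a

attribute [instance] LocalUFDWithCompletion.commRing LocalUFDWithCompletion.isDomain
  LocalUFDWithCompletion.isNoetherian LocalUFDWithCompletion.isLocalRing
  LocalUFDWithCompletion.ufd

/-- `α(A, p)`: the Krull dimension of the formal fiber ring `T ⊗_A κ(p)` of `A` at the
prime ideal `p`, where `κ(p) = A_p / p A_p` and `T` is the completion of `A`. -/
noncomputable def alphaAt {T : Type u} [CommRing T] (X : LocalUFDWithCompletion T)
    (p : Ideal X.A) (hp : p.IsPrime) : WithBot ℕ∞ :=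
  letI := X.toCompletion.toAlgebra
  haveI := hp
  ringKrullDim (TensorProduct X.A T
    (Localization.AtPrime p ⧸ IsLocalRing.maximalIdeal (Localization.AtPrime p)))

/-!
`A` is a subring `R` of `T`, built by a transfinite recursion of length `#(T / m)`, together with a
set of marks `(p, Q)`: `p` generates a height one prime or the zero ideal of `R`, and `Q` lies at
the top of a chain of `d - 1` inclusions of primes of `T` above `p` with `Q ∩ R = pR`. Each step
adjoins an element `x` transcendental over `R` modulo the critical primes of all marks, namely
`Q` and the associated primes of `T / pT`, and passes to `S = T ∩ Frac R[x]`. Such `x` exist by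
prime avoidance, because the stages are smaller than the residue field and critical primes have
height at most `d`. Marks of `R` remain marks of `S`. By a Bézout relation over `Frac R`, an
irreducible element `q` of `S` divisible by no old mark is such that every element of `S` outside
`qT` is regular modulo `q`; this is what permits a new mark at `q`.

The steps ensure that `R → T / m²` is onto, that linear equations over `R` solvable in `T` are
solvable in `R`, that every prime of height at least `d` meets `R` nontrivially, and that every
ideal of height at least `d + 1` contains two elements `x ≠ 0` and `y` of `R` with `y` regular
modulo `x`. The first two make `R` Noetherian with completion `T`, and the marks make it factorial.
The chain below `Q` lies in the formal fiber over `pR`, so the fibers over `0` and over height one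
primes have dimension at least `d - 1`; the last two properties bound the height of the primes in
these fibers, so there are no longer chains.
-/

/-- `x` is transcendental over `R` modulo `P`: a polynomial over `R` takes a value in `P` at `x`
only if all its coefficients lie in `P`. -/
def IsGenericMod {T : Type*} [CommRing T] (R : Subring T) (x : T) (P : Ideal T) : Prop :=
  ∀ f : Polynomial R, Polynomial.aeval x f ∈ P → ∀ i, (f.coeff i : T) ∈ P

section Avoidance

theorem exists_forall_notMem_of_finite {ι α : Type u} {μ : Cardinal.{u}} (hμ : ℵ₀ ≤ μ)
    (hι : #ι ≤ μ) (hα : μ < #α) {bad : ι → Set α} (hbad : ∀ i, (bad i).Finite) :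
    ∃ a, ∀ i, a ∉ bad i := by
  have hle : #(⋃ i, bad i) ≤ μ := by
    refine (mk_iUnion_le _).trans ((mul_le_mul' hι (ciSup_le' fun i => ?_)).trans
      (mul_eq_self hμ).le)
    exact (lt_aleph0_iff_set_finite.2 (hbad i)).le.trans hμ
  by_contra! hcover
  rw [Set.eq_univ_of_forall fun a => Set.mem_iUnion.2 (hcover a), mk_univ] at hle
  exact hle.not_gt hα

variable {T : Type u} [CommRing T]

open Polynomial in
theorem exists_polynomial_eval_mem_and_coeff_notMem [IsNoetherianRing T] (J : Ideal T) :
    ∃ U : T[X], (∀ v, U.eval v ∈ J) ∧ ∀ P : Ideal T, ¬ J ≤ P → ∃ i ≠ 0, U.coeff i ∉ P := by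
  obtain ⟨n, g, rfl⟩ := Submodule.fg_iff_exists_fin_generating_family.1 (IsNoetherian.noetherian J)
  refine ⟨∑ i : Fin n, monomial (i + 1) (g i), fun v => ?_, fun P hP => ?_⟩
  · rw [eval_finsetSum]
    refine Ideal.sum_mem _ fun i _ => ?_
    rw [eval_monomial]
    exact Ideal.mul_mem_right _ _ (Ideal.subset_span ⟨i, rfl⟩)
  · obtain ⟨_, ⟨i, rfl⟩, hi⟩ := Set.not_subset.1 (mt Ideal.span_le.2 hP)
    refine ⟨i + 1, by simp, ?_⟩
    simpa [coeff_monomial, ← Fin.ext_iff] using hi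

variable [IsLocalRing T]

theorem injective_mk_comp_section {σ : ResidueField T → T}
    (hσ : Function.RightInverse σ (residue T)) {P : Ideal T} (hP : P ≠ ⊤) :
    Function.Injective (Ideal.Quotient.mk P ∘ σ) := by
  intro v w hvw
  have hmem := le_maximalIdeal hP (Ideal.Quotient.eq.1 hvw)
  rw [← hσ v, ← hσ w, ← sub_eq_zero, ← map_sub]
  exact (residue_eq_zero_iff _).2 hmem

open Polynomial in
theorem finite_setOf_aeval_eval_mem {σ : ResidueField T → T}
    (hσ : Function.RightInverse σ (residue T)) {R : Subring T} {P : Ideal T} (hP : P.IsPrime)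
    {W : T[X]} (hW : ∃ i ≠ 0, W.coeff i ∉ P) {f : R[X]} (hf : ∃ i, (f.coeff i : T) ∉ P) :
    {v | aeval (W.eval (σ v)) f ∈ P}.Finite := by
  let π := Ideal.Quotient.mk P
  let g : (T ⧸ P)[X] := f.map (π.comp R.subtype)
  have hg : g ≠ 0 := by
    obtain ⟨i, hi⟩ := hf
    intro h0
    exact hi (Ideal.Quotient.eq_zero_iff_mem.1 (by simpa [g] using congrArg (coeff · i) h0))
  have hWπ : (W.map π).natDegree ≠ 0 := by
    obtain ⟨i, hi0, hi⟩ := hW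
    intro h0
    exact hi (Ideal.Quotient.eq_zero_iff_mem.1 (by
      simpa using coeff_eq_zero_of_natDegree_lt (h0.trans_lt (Nat.pos_of_ne_zero hi0))))
  have hcomp : g.comp (W.map π) ≠ 0 := by
    rw [Ne, comp_eq_zero_iff]
    rintro (h | ⟨-, h⟩)
    · exact hg h
    · exact hWπ (by rw [h, natDegree_C])
  refine Set.Finite.of_finite_image ?_ (injective_mk_comp_section hσ hP.ne_top).injOn
  refine (Multiset.finite_toSet (g.comp (W.map π)).roots).subset ?_
  rintro _ ⟨v, hv, rfl⟩
  have hroot : π (aeval (W.eval (σ v)) f) = 0 := Ideal.Quotient.eq_zero_iff_mem.2 hv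
  rw [Set.mem_ofPred_eq, mem_roots hcomp, IsRoot.def, eval_comp,
    Function.comp_apply, eval_map_apply, eval_map, ← hroot, aeval_def, hom_eval₂]
  rfl

open Polynomial in
theorem exists_mem_forall_isGenericMod [IsNoetherianRing T] (R : Subring T) (J : Ideal T)
    (C : Set (Ideal T)) (B : Set (T × T)) {μ : Cardinal.{u}} (hμ : ℵ₀ ≤ μ)
    (hμT : μ < #(ResidueField T)) (hR : #R ≤ μ) (hC : #C ≤ μ) (hB : #B ≤ μ)
    (hprime : ∀ P ∈ C, P.IsPrime) (hJ : ∀ P ∈ C, ¬ J ≤ P) :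
    ∃ u ∈ J, ∀ P ∈ C, ∀ b ∈ B, b.2 ∉ P → IsGenericMod R (b.1 + b.2 * u) P := by
  obtain ⟨U, hUJ, hU⟩ := exists_polynomial_eval_mem_and_coeff_notMem J
  obtain ⟨σ, hσ⟩ := (residue_surjective (R := T)).hasRightInverse
  let bad : (C × B) × R[X] → Set (ResidueField T) := fun e =>
    {v | aeval (e.1.2.1.1 + e.1.2.1.2 * U.eval (σ v)) e.2 ∈ e.1.1.1 ∧
      e.1.2.1.2 ∉ e.1.1.1 ∧ ∃ i, (e.2.coeff i : T) ∉ e.1.1.1}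
  have hbad : ∀ e, (bad e).Finite := by
    rintro ⟨⟨⟨P, hP⟩, ⟨a, b⟩, -⟩, f⟩
    by_cases hbf : b ∉ P ∧ ∃ i, (f.coeff i : T) ∉ P
    · obtain ⟨hb, hf⟩ := hbf
      obtain ⟨i, hi0, hi⟩ := hU P (hJ P hP)
      have hW : (Polynomial.C a + Polynomial.C b * U).coeff i ∉ P := by
        rw [coeff_add, coeff_C_mul, coeff_C_of_ne_zero hi0, zero_add]
        exact (hprime P hP).mul_notMem hb hi
      exact (finite_setOf_aeval_eval_mem hσ (hprime P hP) ⟨i, hi0, hW⟩ hf).subset fun v hv => by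
        simpa using hv.1
    · exact Set.finite_empty.subset fun v hv => hbf hv.2
  have hcard : #((C × B) × R[X]) ≤ μ := by
    simp only [mk_prod, lift_id]
    exact (mul_le_mul' ((mul_le_mul' hC hB).trans (mul_eq_self hμ).le)
      (cardinalMk_le_max.trans (max_le hR hμ))).trans (mul_eq_self hμ).le
  obtain ⟨v, hv⟩ := exists_forall_notMem_of_finite hμ hcard hμT hbad
  refine ⟨U.eval (σ v), hUJ _, fun P hP b hb hbP f hf => ?_⟩
  by_contra! h
  exact hv ((⟨P, hP⟩, ⟨b, hb⟩), f) ⟨hf, hbP, h⟩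

end Avoidance

section Dimension

variable {R : Type*} [CommRing R]

theorem ringKrullDim_quotient_eq_coheight (P : PrimeSpectrum R) :
    ringKrullDim (R ⧸ P.asIdeal) = (Order.coheight P : ℕ∞) := by
  rw [ringKrullDim_quotient, Order.coheight_eq_krullDim_Ici]
  rfl

theorem height_add_coheight_le_ringKrullDim (P : PrimeSpectrum R) :
    ((Order.height P + Order.coheight P : ℕ∞) : WithBot ℕ∞) ≤ ringKrullDim R := by
  have : Nonempty (PrimeSpectrum R) := ⟨P⟩
  rw [ringKrullDim, Order.krullDim_eq_iSup_height_add_coheight_of_nonempty]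
  exact_mod_cast le_iSup (fun a : PrimeSpectrum R => Order.height a + Order.coheight a) P

theorem exists_mem_minimalPrimes_le_coheight {I : Ideal R} {k : ℕ}
    (hk : (k : WithBot ℕ∞) ≤ ringKrullDim (R ⧸ I)) :
    ∃ p : PrimeSpectrum R, p.asIdeal ∈ I.minimalPrimes ∧ (k : ℕ∞) ≤ Order.coheight p := by
  rw [ringKrullDim_quotient, Order.le_krullDim_iff] at hk
  obtain ⟨l, rfl⟩ := hk
  obtain ⟨p, hp, hple⟩ := Ideal.exists_minimalPrimes_le (show I ≤ l.head.1.asIdeal from l.head.2)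
  refine ⟨⟨p, hp.1.1⟩, hp, ?_⟩
  exact Order.length_le_coheight (p := l.map Subtype.val fun _ _ h => h) hple

theorem le_ringKrullDim_quotient_span_singleton [IsLocalRing R] [IsNoetherianRing R] {z : R}
    (hz : z ∈ maximalIdeal R) {k : ℕ} (hk : ((k + 1 : ℕ) : WithBot ℕ∞) ≤ ringKrullDim R) :
    (k : WithBot ℕ∞) ≤ ringKrullDim (R ⧸ Ideal.span {z}) := by
  have hle := ringKrullDim_le_ringKrullDim_quotient_add_card ({z} : Finset R) (by
    rwa [IsLocalRing.ringJacobson_eq_maximalIdeal, Finset.coe_singleton, Set.singleton_subset_iff])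
  rw [Finset.coe_singleton, Finset.card_singleton] at hle
  refine (WithBot.add_le_add_iff_right' (WithBot.coe_ne_bot (a := (1 : ℕ∞)))
    (WithBot.coe_inj.not.2 ENat.one_ne_top)).1 (hk.trans hle)

theorem exists_mem_maximalIdeal_notMem_minimalPrimes_span_singleton [IsLocalRing R]
    [IsNoetherianRing R] (hR : 2 ≤ ringKrullDim R) (x : R) :
    ∃ y ∈ maximalIdeal R, ∀ p ∈ (Ideal.span {x}).minimalPrimes, y ∉ p := by
  by_contra! hcover
  have hsub : (maximalIdeal R : Set R) ⊆ ⋃ p ∈ (Ideal.span {x}).minimalPrimes, (p : Set R) := by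
    intro y hy
    obtain ⟨p, hp, hyp⟩ := hcover y hy
    exact Set.mem_biUnion hp hyp
  rw [Ideal.subset_union_prime_finite (Ideal.finite_minimalPrimes_of_isNoetherianRing R _) ⊥ ⊥
    fun p hp _ _ => hp.1.1] at hsub
  obtain ⟨p, hp, hle⟩ := hsub
  have hheight := (Ideal.height_mono hle).trans
    (Ideal.height_le_one_of_isPrincipal_of_mem_minimalPrimes _ p hp)
  rw [← IsLocalRing.maximalIdeal_height_eq_ringKrullDim] at hR
  have h21 : (2 : ℕ∞) ≤ 1 := (WithBot.coe_le_coe.1 hR).trans hheight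
  exact absurd h21 (by decide)

theorem mem_minimalPrimes_span_singleton_of_height_le_one [IsDomain R] [IsNoetherianRing R]
    {p : Ideal R} [p.IsPrime] (hp : p.height ≤ 1) {s : R} (hs0 : s ≠ 0) (hs : s ∈ p) :
    p ∈ (Ideal.span {s}).minimalPrimes :=
  Ideal.mem_minimalPrimes_of_height_le ((Ideal.span_singleton_le_iff_mem _).2 hs)
    (hp.trans (Ideal.one_le_height_span_singleton_of_mem_nonZeroDivisors
      (mem_nonZeroDivisors_of_ne_zero hs0)))

-- The primes are minimal over the elements `y + v x`, with `v` running through representatives of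
-- the residue field: two of these elements in the same prime would put `x`, hence `y`, in it.
theorem exists_injective_primeSpectrum_height_le_one [IsDomain R] [IsLocalRing R]
    [IsNoetherianRing R] {j : ℕ} (hj1 : 1 ≤ j) (hj : ((j + 1 : ℕ) : WithBot ℕ∞) ≤ ringKrullDim R) :
    ∃ P : ResidueField R → PrimeSpectrum R, Function.Injective P ∧
      ∀ v, (P v).asIdeal ≠ ⊥ ∧ (P v).asIdeal.height ≤ 1 ∧ (j : ℕ∞) ≤ Order.coheight (P v) := by
  have hR : 2 ≤ ringKrullDim R := le_trans (by exact_mod_cast Nat.succ_le_succ hj1) hj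
  obtain ⟨x, hxm, hx⟩ := exists_mem_maximalIdeal_notMem_minimalPrimes_span_singleton hR (0 : R)
  have hx0 : x ≠ 0 := by
    rintro rfl
    obtain ⟨p, hp⟩ := Ideal.nonempty_minimalPrimes
      (Ideal.span_singleton_eq_top.not.2 (not_isUnit_zero (M₀ := R)))
    exact hx p hp (zero_mem p)
  obtain ⟨y, hym, hy⟩ := exists_mem_maximalIdeal_notMem_minimalPrimes_span_singleton hR x
  obtain ⟨σ, hσ⟩ := (residue_surjective (R := R)).hasRightInverse
  choose P hP hPc using fun v => exists_mem_minimalPrimes_le_coheight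
    (le_ringKrullDim_quotient_span_singleton
      (add_mem hym (Ideal.mul_mem_left _ (σ v) hxm)) hj)
  have hmem (v) : y + σ v * x ∈ (P v).asIdeal := (hP v).1.2 (Ideal.mem_span_singleton_self _)
  have hPh (v) : (P v).asIdeal.height ≤ 1 :=
    Ideal.height_le_one_of_isPrincipal_of_mem_minimalPrimes _ _ (hP v)
  have hxP (v) : x ∉ (P v).asIdeal := fun hx =>
    hy _ (mem_minimalPrimes_span_singleton_of_height_le_one (hPh v) hx0 hx)
      ((Ideal.add_mem_iff_left _ (Ideal.mul_mem_left _ _ hx)).1 (hmem v))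
  refine ⟨P, fun v w hvw => ?_, fun v => ⟨fun hbot => ?_, hPh v, hPc v⟩⟩
  · by_contra hne
    have hu : IsUnit (σ v - σ w) := by
      rwa [← IsLocalRing.residue_ne_zero_iff_isUnit, map_sub, hσ, hσ, sub_ne_zero]
    have hsub := sub_mem (hmem v) (hvw ▸ hmem w)
    rw [add_sub_add_left_eq_sub, ← sub_mul] at hsub
    exact hxP v ((Ideal.unit_mul_mem_iff_mem _ hu).1 hsub)
  · obtain ⟨p, hp⟩ := Ideal.nonempty_minimalPrimes (I := Ideal.span {x})
      (Ideal.span_singleton_eq_top.not.2 hxm)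
    have h0 := hmem v
    rw [hbot, Ideal.mem_bot, add_eq_zero_iff_eq_neg] at h0
    exact hy p hp
      (h0 ▸ neg_mem (Ideal.mul_mem_left _ _ (hp.1.2 (Ideal.mem_span_singleton_self x))))

theorem exists_primeSpectrum_ne_bot_forall_notMem {D : Type u} [CommRing D] [IsDomain D]
    [IsLocalRing D] [IsNoetherianRing D] {S : Set D} {μ : Cardinal.{u}} (hμ : ℵ₀ ≤ μ)
    (hμD : μ < #(ResidueField D)) (hS : #S ≤ μ) (hS0 : (0 : D) ∉ S) {j : ℕ} (hj1 : 1 ≤ j)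
    (hj : ((j + 1 : ℕ) : WithBot ℕ∞) ≤ ringKrullDim D) :
    ∃ p : PrimeSpectrum D, p.asIdeal ≠ ⊥ ∧ (∀ s ∈ S, s ∉ p.asIdeal) ∧
      (j : ℕ∞) ≤ Order.coheight p := by
  obtain ⟨P, hinj, hP⟩ := exists_injective_primeSpectrum_height_le_one hj1 hj
  have hfin (s : S) : {v | (s : D) ∈ (P v).asIdeal}.Finite := by
    refine Set.Finite.of_finite_image (f := fun v => (P v).asIdeal) ?_
      fun v _ w _ h => hinj (PrimeSpectrum.ext h)
    refine (Ideal.finite_minimalPrimes_of_isNoetherianRing D (Ideal.span {(s : D)})).subset ?_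
    rintro _ ⟨v, hv, rfl⟩
    exact mem_minimalPrimes_span_singleton_of_height_le_one (hP v).2.1
      (ne_of_mem_of_not_mem s.2 hS0) hv
  obtain ⟨v, hv⟩ := exists_forall_notMem_of_finite hμ hS hμD hfin
  exact ⟨P v, (hP v).1, fun s hs => hv ⟨s, hs⟩, (hP v).2.2⟩

variable {T : Type u} [CommRing T] [IsLocalRing T] [IsNoetherianRing T]

theorem exists_lt_primeSpectrum_forall_notMem {S : Set T} {μ : Cardinal.{u}} (hμ : ℵ₀ ≤ μ)
    (hμT : μ < #(ResidueField T)) (hS : #S ≤ μ) {P : PrimeSpectrum T}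
    (hP : ∀ s ∈ S, s ∉ P.asIdeal) {j : ℕ} (hj1 : 1 ≤ j)
    (hj : ((j + 1 : ℕ) : ℕ∞) ≤ Order.coheight P) :
    ∃ Q : PrimeSpectrum T, P < Q ∧ (∀ s ∈ S, s ∉ Q.asIdeal) ∧ (j : ℕ∞) ≤ Order.coheight Q := by
  let π := Ideal.Quotient.mk P.asIdeal
  have : IsLocalRing (T ⧸ P.asIdeal) := .of_surjective' π Ideal.Quotient.mk_surjective
  have : IsLocalHom π := Ideal.Quotient.mk_surjective.isLocalHom
  have hres : #(ResidueField T) ≤ #(ResidueField (T ⧸ P.asIdeal)) :=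
    mk_le_of_injective (ResidueField.map π).injective
  obtain ⟨p, hp0, hpS, hpc⟩ := exists_primeSpectrum_ne_bot_forall_notMem (S := π '' S) hμ
    (hμT.trans_le hres) (mk_image_le.trans hS)
    (by rintro ⟨s, hs, h0⟩; exact hP s hs (Ideal.Quotient.eq_zero_iff_mem.1 h0)) hj1
    (by rw [ringKrullDim_quotient_eq_coheight]; exact WithBot.coe_le_coe.2 hj)
  refine ⟨p.comap π, lt_of_le_of_ne (fun t ht => ?_) fun h => hp0 ?_,
    fun s hs h => hpS _ ⟨s, hs, rfl⟩ h, hpc.trans ?_⟩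
  · change π t ∈ p.asIdeal
    rw [Ideal.Quotient.eq_zero_iff_mem.2 ht]
    exact zero_mem _
  · rw [eq_bot_iff]
    intro t ht
    obtain ⟨t, rfl⟩ := Ideal.Quotient.mk_surjective t
    have hmem : t ∈ (p.comap π).asIdeal := ht
    rw [← h] at hmem
    exact Ideal.Quotient.eq_zero_iff_mem.2 hmem
  · exact Order.coheight_le_coheight_apply_of_strictMono (PrimeSpectrum.comap π)
      (fun a b hab => P.asIdeal.primeSpectrumQuotientOrderIsoZeroLocus.strictMono hab) p

theorem exists_ltSeries_forall_notMem_height_le {n : ℕ} (hn : ringKrullDim T = n) {S : Set T}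
    {μ : Cardinal.{u}} (hμ : ℵ₀ ≤ μ) (hμT : μ < #(ResidueField T)) (hS : #S ≤ μ)
    {P : PrimeSpectrum T} (hP : ∀ s ∈ S, s ∉ P.asIdeal) {k e : ℕ} (hke : k + e < n)
    (hPc : (n : ℕ∞) ≤ Order.coheight P + e) :
    ∃ l : LTSeries (PrimeSpectrum T), l.length = k ∧ l.head = P ∧
      (∀ s ∈ S, s ∉ l.last.asIdeal) ∧ l.last.asIdeal.height ≤ (k + e : ℕ) := by
  induction k generalizing P e with
  | zero =>
    refine ⟨RelSeries.singleton _ P, rfl, rfl, hP, ?_⟩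
    rw [zero_add, RelSeries.last_singleton, PrimeSpectrum.height_eq_orderHeight]
    have hle := height_add_coheight_le_ringKrullDim P
    rw [hn] at hle
    have hle' : Order.height P + Order.coheight P ≤ Order.coheight P + e :=
      le_trans (WithBot.coe_le_coe.1 hle) hPc
    rw [add_comm] at hle'
    refine (ENat.add_le_add_iff_left ?_).1 hle'
    rintro h
    rw [h, add_top] at hle
    exact absurd (WithBot.coe_le_coe.1 hle) (by simp)
  | succ k ih =>
    obtain ⟨j, rfl⟩ : ∃ j, n = j + 1 + e := ⟨n - e - 1, by omega⟩
    rw [Nat.cast_add, ENat.add_le_add_iff_right (ENat.natCast_ne_top e)] at hPc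
    obtain ⟨Q, hPQ, hQ, hQc⟩ :=
      exists_lt_primeSpectrum_forall_notMem hμ hμT hS hP (j := j) (by omega) hPc
    obtain ⟨l, rfl, rfl, hlS, hl⟩ := ih hQ (e := e + 1) (by omega) (by
      rw [add_assoc j, add_comm 1 e, Nat.cast_add]
      gcongr)
    refine ⟨l.cons P hPQ, RelSeries.cons_length .., RelSeries.head_cons .., ?_, ?_⟩
    · rwa [RelSeries.last_cons]
    · rwa [RelSeries.last_cons, add_right_comm, add_assoc]

end Dimension

section RegularMod

variable {T : Type*} [CommRing T]

/-- `r` is a nonzerodivisor modulo `p`. -/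
def IsRegularMod (p r : T) : Prop := ∀ t, p ∣ r * t → p ∣ t

namespace IsRegularMod

variable {p q a b : T}

theorem mul (ha : IsRegularMod p a) (hb : IsRegularMod p b) : IsRegularMod p (a * b) :=
  fun t ht => hb t (ha _ (by rwa [← mul_assoc]))

theorem of_isUnit (ha : IsUnit a) : IsRegularMod p a := fun _ => ha.dvd_mul_left.1

theorem symm (hp : p ∈ nonZeroDivisors T) (h : IsRegularMod p q) : IsRegularMod q p := by
  rintro t ⟨c, hc⟩
  obtain ⟨c', rfl⟩ := h c ⟨t, hc.symm⟩
  exact ⟨c', (mul_cancel_left_mem_nonZeroDivisors hp).1 (hc.trans (mul_left_comm q p c'))⟩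

end IsRegularMod

theorem isRegularMod_zero_iff {r : T} : IsRegularMod 0 r ↔ r ∈ nonZeroDivisors T := by
  simp only [IsRegularMod, zero_dvd_iff, mem_nonZeroDivisors_iff_left]

theorem isRegularMod_iff_forall_associatedPrimes [IsNoetherianRing T] {p r : T} :
    IsRegularMod p r ↔ ∀ P ∈ associatedPrimes T (T ⧸ Ideal.span {p}), r ∉ P := by
  have hUnion := Set.ext_iff.1
    (biUnion_associatedPrimes_eq_zero_divisors T (T ⧸ Ideal.span {p})) r
  simp only [Set.mem_iUnion₂, SetLike.mem_coe, Set.mem_ofPred_eq,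
    Ideal.Quotient.mk_surjective.exists, Algebra.smul_def, Ideal.Quotient.algebraMap_eq,
    ← map_mul, Ideal.Quotient.eq_zero_iff_dvd, ne_eq, exists_prop] at hUnion
  rw [← not_iff_not]
  simp only [IsRegularMod, not_forall, not_not, exists_prop, hUnion]
  exact exists_congr fun t => and_comm

end RegularMod

theorem wfDvdMonoid_of_isNoetherianRing_of_isLocalRing (T : Type*) [CommRing T] [IsLocalRing T]
    [IsNoetherianRing T] : WfDvdMonoid T := by
  have hlt : ∀ {a b : T}, DvdNotUnit a b → Ideal.span {b} < Ideal.span {a} := by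
    rintro a _ ⟨ha, x, hx, rfl⟩
    refine lt_of_le_not_ge (Ideal.span_singleton_le_span_singleton.2 (dvd_mul_right a x)) ?_
    intro hle
    obtain ⟨y, hy⟩ := Ideal.span_singleton_le_span_singleton.1 hle
    have hu : IsUnit (1 - x * y) := (isUnit_or_isUnit_one_sub_self (x * y)).resolve_left
      fun h => hx (isUnit_of_mul_isUnit_left h)
    exact ha (hu.mul_left_eq_zero.1 (by linear_combination hy))
  exact ⟨(InvImage.wf (fun a : T => Ideal.span {a}) wellFounded_gt).mono fun _ _ => hlt⟩

section FractionClosure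

variable {T : Type u} [CommRing T]

/-- The subring of `T` of all elements which are fractions over `B` with regular denominator:
the intersection of `T` with the localization of `B` inside the total ring of fractions. -/
def fractionClosure (B : Subring T) : Subring T where
  carrier := {s | ∃ a ∈ B, a ∈ nonZeroDivisors T ∧ a * s ∈ B}
  mul_mem' := by
    rintro s t ⟨a, haB, ha, has⟩ ⟨b, hbB, hb, hbt⟩
    exact ⟨a * b, B.mul_mem haB hbB, mul_mem ha hb, mul_mul_mul_comm a b s t ▸ B.mul_mem has hbt⟩
  one_mem' := ⟨1, B.one_mem, one_mem _, by simp [B.one_mem]⟩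
  add_mem' := by
    rintro s t ⟨a, haB, ha, has⟩ ⟨b, hbB, hb, hbt⟩
    refine ⟨a * b, B.mul_mem haB hbB, mul_mem ha hb, ?_⟩
    rw [show a * b * (s + t) = b * (a * s) + a * (b * t) by ring]
    exact B.add_mem (B.mul_mem hbB has) (B.mul_mem haB hbt)
  zero_mem' := ⟨1, B.one_mem, one_mem _, by simp [B.zero_mem]⟩
  neg_mem' := by
    rintro s ⟨a, haB, ha, has⟩
    exact ⟨a, haB, ha, by simpa using has⟩

theorem le_fractionClosure (B : Subring T) : B ≤ fractionClosure B := fun s hs =>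
  ⟨1, B.one_mem, one_mem _, by simpa using hs⟩

theorem fractionClosure_mono {B C : Subring T} (h : B ≤ C) :
    fractionClosure B ≤ fractionClosure C := by
  rintro s ⟨a, haB, ha, has⟩
  exact ⟨a, h haB, ha, h has⟩

theorem fractionClosure_fractionClosure_le (B : Subring T) :
    fractionClosure (fractionClosure B) ≤ fractionClosure B := by
  rintro s ⟨a, ⟨b, hbB, hb, hba⟩, ha, ⟨c, hcB, hc, hcs⟩⟩
  refine ⟨c * (b * a), B.mul_mem hcB hba, mul_mem hc (mul_mem hb ha), ?_⟩
  rw [show c * (b * a) * s = b * (c * (a * s)) by ring]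
  exact B.mul_mem hbB hcs

theorem fractionClosure_le_iff {B C : Subring T} (hC : fractionClosure C ≤ C) :
    fractionClosure B ≤ C ↔ B ≤ C :=
  ⟨(le_fractionClosure B).trans, fun h => (fractionClosure_mono h).trans hC⟩

theorem mk_fractionClosure_le {B : Subring T} {μ : Cardinal.{u}} (hμ : ℵ₀ ≤ μ) (hB : #B ≤ μ) :
    #(fractionClosure B) ≤ μ := by
  choose a haB ha has using fun s : fractionClosure B => s.2
  have hinj : Function.Injective fun s : fractionClosure B =>
      ((⟨a s, haB s⟩, ⟨a s * s, has s⟩) : B × B) := by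
    intro s t h
    simp only [Prod.mk.injEq, Subtype.mk.injEq] at h
    obtain ⟨hden, hnum⟩ := h
    rw [hden] at hnum
    exact Subtype.ext ((mul_cancel_left_mem_nonZeroDivisors (ha t)).1 hnum)
  refine (mk_le_of_injective hinj).trans ?_
  rw [mk_prod, lift_id]
  exact (mul_le_mul' hB hB).trans (mul_eq_self hμ).le

/-- `T ∩ Frac R[x]`: the smallest subring of `T` closed under fractions which contains `R`
and `x`. -/
noncomputable def fractionAdjoin (R : Subring T) (x : T) : Subring T :=
  fractionClosure (Polynomial.aeval (R := R) x).toRingHom.range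

theorem aeval_mem_fractionAdjoin {R : Subring T} (x : T) (f : Polynomial R) :
    Polynomial.aeval x f ∈ fractionAdjoin R x :=
  le_fractionClosure _ ⟨f, rfl⟩

theorem le_fractionAdjoin (R : Subring T) (x : T) : R ≤ fractionAdjoin R x := fun r hr => by
  have := aeval_mem_fractionAdjoin x (Polynomial.C (⟨r, hr⟩ : R))
  rwa [Polynomial.aeval_C] at this

theorem self_mem_fractionAdjoin (R : Subring T) (x : T) : x ∈ fractionAdjoin R x := by
  simpa using aeval_mem_fractionAdjoin x (Polynomial.X : Polynomial R)

theorem fractionAdjoin_le {R S : Subring T} {x : T} (hS : fractionClosure S ≤ S) (h : R ≤ S)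
    (hx : x ∈ S) : fractionAdjoin R x ≤ S := by
  refine (fractionClosure_le_iff hS).2 ?_
  rintro _ ⟨f, rfl⟩
  change Polynomial.aeval x f ∈ S
  rw [Polynomial.aeval_eq_sum_range]
  exact S.sum_mem fun i _ => S.mul_mem (h (f.coeff i).2) (S.pow_mem hx i)

theorem fractionClosure_fractionAdjoin_le (R : Subring T) (x : T) :
    fractionClosure (fractionAdjoin R x) ≤ fractionAdjoin R x :=
  fractionClosure_fractionClosure_le _

theorem mk_fractionAdjoin_le {R : Subring T} {μ : Cardinal.{u}} (hμ : ℵ₀ ≤ μ) (hR : #R ≤ μ)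
    (x : T) : #(fractionAdjoin R x) ≤ μ := by
  refine mk_fractionClosure_le hμ ((mk_le_of_surjective (f := fun f : Polynomial R =>
    (⟨Polynomial.aeval x f, f, rfl⟩ : (Polynomial.aeval (R := R) x).toRingHom.range)) ?_).trans
    (Polynomial.cardinalMk_le_max.trans (max_le hR hμ)))
  rintro ⟨_, f, rfl⟩
  exact ⟨f, rfl⟩

end FractionClosure

section Marks

/-- The primes which the elements of a subring marked by `c = (p, Q)` may meet only in multiples
of `p`: the associated primes of `T / pT`, and `Q`. -/
def criticalPrimes {T : Type*} [CommRing T] (c : T × Ideal T) : Set (Ideal T) :=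
  insert c.2 (associatedPrimes T (T ⧸ Ideal.span {c.1}))

/-- `c = (p, Q)` is a mark of the subring `R`: the element `p` of `R` divides every element of `R`
which lies in one of the critical primes of `c`. When `R` is closed under fractions, `p` is then
zero or prime in `R`, and `Q ∩ R = pR`. -/
structure IsMark {T : Type*} [CommRing T] (R : Subring T) (c : T × Ideal T) : Prop where
  mem : c.1 ∈ R
  dvd_of_mem : ∀ P ∈ criticalPrimes c, ∀ r ∈ R, r ∈ P → c.1 ∣ r

/-- For `c = (p, Q)`: the prime `Q` is the top of a chain of primes of length `k` above `p`, and
has the smallest height compatible with this when associated primes of `T` have height at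
most `k`. -/
structure IsChainTop {T : Type*} [CommRing T] [IsLocalRing T] (k : ℕ) (c : T × Ideal T) :
    Prop where
  mem_maximalIdeal : c.1 ∈ maximalIdeal T
  exists_ltSeries : ∃ l : LTSeries (PrimeSpectrum T),
    l.length = k ∧ c.1 ∈ l.head.asIdeal ∧ l.last.asIdeal = c.2
  height_le : c.2.height ≤ (k + 1 : ℕ)
  height_le_of_eq_zero : c.1 = 0 → c.2.height ≤ k

variable {T : Type u} [CommRing T] {R : Subring T} {c : T × Ideal T}

theorem finite_criticalPrimes [IsNoetherianRing T] (c : T × Ideal T) :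
    (criticalPrimes c).Finite :=
  (associatedPrimes.finite T _).insert _

theorem IsMark.isRegularMod [IsNoetherianRing T] (hc : IsMark R c) {r : T} (hr : r ∈ R)
    (hcr : ¬ c.1 ∣ r) : IsRegularMod c.1 r :=
  isRegularMod_iff_forall_associatedPrimes.2 fun P hP hrP =>
    hcr (hc.dvd_of_mem P (Set.mem_insert_of_mem _ hP) r hr hrP)

theorem isMark_of_isRegularMod [IsNoetherianRing T] (hmem : c.1 ∈ R)
    (hreg : ∀ r ∈ R, ¬ c.1 ∣ r → IsRegularMod c.1 r) (hQ : ∀ r ∈ R, ¬ c.1 ∣ r → r ∉ c.2) :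
    IsMark R c where
  mem := hmem
  dvd_of_mem := by
    rintro P (rfl | hP) r hr hrP <;> by_contra hcr
    · exact hQ r hr hcr hrP
    · exact isRegularMod_iff_forall_associatedPrimes.1 (hreg r hr hcr) P hP hrP

variable [IsLocalRing T] {k : ℕ}

theorem IsChainTop.isPrime (hc : IsChainTop k c) : c.2.IsPrime := by
  obtain ⟨l, -, -, hl⟩ := hc.exists_ltSeries
  exact hl ▸ l.last.2

theorem IsChainTop.fst_mem (hc : IsChainTop k c) : c.1 ∈ c.2 := by
  obtain ⟨l, -, hhead, hl⟩ := hc.exists_ltSeries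
  exact hl ▸ (LTSeries.head_le_last l : l.head ≤ l.last) hhead

theorem IsChainTop.isPrime_of_mem_criticalPrimes (hc : IsChainTop k c) {P : Ideal T}
    (hP : P ∈ criticalPrimes c) : P.IsPrime := by
  rcases hP with rfl | hP
  exacts [hc.isPrime, hP.isPrime]

theorem IsChainTop.fst_mem_of_mem_criticalPrimes (hc : IsChainTop k c) {P : Ideal T}
    (hP : P ∈ criticalPrimes c) : c.1 ∈ P := by
  rcases hP with rfl | hP
  · exact hc.fst_mem
  · refine IsAssociatedPrime.annihilator_le hP ?_
    rw [Submodule.annihilator_top, Ideal.annihilator_quotient]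
    exact Ideal.mem_span_singleton_self _

/-- A subring of `T` closed under fractions, with a set of marks among which one is at zero; all
marks sit at the top of a chain of primes of length `k`. -/
structure IsMarkedSubring (k : ℕ) (R : Subring T) (M : Set (T × Ideal T)) : Prop where
  fractionClosure_le : fractionClosure R ≤ R
  isMark : ∀ c ∈ M, IsMark R c
  isChainTop : ∀ c ∈ M, IsChainTop k c
  exists_fst_eq_zero : ∃ c ∈ M, c.1 = 0

/-- A marked subring all of whose nonzero nonunits are divisible by a marked element. -/
structure IsFullyMarkedSubring (k : ℕ) (R : Subring T) (M : Set (T × Ideal T)) : Prop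
    extends IsMarkedSubring k R M where
  exists_fst_dvd : ∀ r ∈ R, r ≠ 0 → r ∈ maximalIdeal T → ∃ c ∈ M, c.1 ∣ r

namespace IsMarkedSubring

variable {M : Set (T × Ideal T)}

theorem mem_nonZeroDivisors [IsNoetherianRing T] (h : IsMarkedSubring k R M) {r : T} (hr : r ∈ R)
    (hr0 : r ≠ 0) : r ∈ nonZeroDivisors T := by
  obtain ⟨c, hc, hc0⟩ := h.exists_fst_eq_zero
  have := (h.isMark c hc).isRegularMod hr (by rwa [hc0, zero_dvd_iff])
  rwa [hc0, isRegularMod_zero_iff] at this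

theorem mem_of_mul_mem [IsNoetherianRing T] (h : IsMarkedSubring k R M) {a s : T} (ha : a ∈ R)
    (ha0 : a ≠ 0) (has : a * s ∈ R) : s ∈ R :=
  h.fractionClosure_le ⟨a, ha, h.mem_nonZeroDivisors ha ha0, has⟩

theorem coe_dvd_coe [IsNoetherianRing T] (h : IsMarkedSubring k R M) {a b : R} :
    (a : T) ∣ b ↔ a ∣ b := by
  refine ⟨fun ⟨t, ht⟩ => ?_, map_dvd R.subtype⟩
  by_cases ha : (a : T) = 0
  · rw [ha, zero_mul] at ht
    exact (Subtype.ext ht : b = 0) ▸ dvd_zero a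
  · exact ⟨⟨t, h.mem_of_mul_mem a.2 ha (ht ▸ b.2)⟩, Subtype.ext ht⟩

theorem isDomain [IsNoetherianRing T] (h : IsMarkedSubring k R M) : IsDomain R := by
  have : NoZeroDivisors R := ⟨fun {a b} hab => or_iff_not_imp_left.2 fun ha => Subtype.ext <|
    (mul_left_mem_nonZeroDivisors_eq_zero_iff (h.mem_nonZeroDivisors a.2 fun h0 =>
      ha (Subtype.ext h0))).1 (congrArg Subtype.val hab)⟩
  exact NoZeroDivisors.to_isDomain R

theorem isLocalHom_subtype [IsNoetherianRing T] (h : IsMarkedSubring k R M) :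
    IsLocalHom R.subtype where
  map_nonunit a ha := isUnit_of_dvd_one (h.coe_dvd_coe.1 (by simpa using ha.dvd))

theorem isLocalRing [IsNoetherianRing T] (h : IsMarkedSubring k R M) : IsLocalRing R :=
  have := h.isLocalHom_subtype
  RingHom.domain_isLocalRing R.subtype

theorem mem_maximalIdeal_iff [IsNoetherianRing T] (h : IsMarkedSubring k R M) {r : R} :
    (r : T) ∈ maximalIdeal T ↔ ¬ IsUnit r := by
  have := h.isLocalHom_subtype
  exact (IsLocalRing.mem_maximalIdeal _).trans
    (not_congr (isUnit_map_iff R.subtype r))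

theorem wfDvdMonoid [IsNoetherianRing T] (h : IsMarkedSubring k R M) : WfDvdMonoid R := by
  have := h.isLocalHom_subtype
  have := wfDvdMonoid_of_isNoetherianRing_of_isLocalRing T
  refine ⟨(InvImage.wf R.subtype wellFounded_dvdNotUnit).mono ?_⟩
  rintro a _ ⟨ha, x, hx, rfl⟩
  exact ⟨fun h0 => ha (Subtype.ext h0), x, mt (isUnit_of_map_unit R.subtype x) hx, rfl⟩

theorem C_dvd_of_aeval_mem [IsNoetherianRing T] (h : IsMarkedSubring k R M) (hc : c ∈ M)
    {x : T} {P : Ideal T} (hP : P ∈ criticalPrimes c) (hx : IsGenericMod R x P)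
    {f : Polynomial R} (hf : Polynomial.aeval x f ∈ P) :
    Polynomial.C ⟨c.1, (h.isMark c hc).mem⟩ ∣ f :=
  (Polynomial.C_dvd_iff_dvd_coeff _ _).2 fun i => h.coe_dvd_coe.1 <|
    (h.isMark c hc).dvd_of_mem P hP _ (f.coeff i).2 (hx f hf i)

open Polynomial in
theorem fst_dvd_of_aeval_eq_mul [IsNoetherianRing T] (h : IsMarkedSubring k R M) (hc : c ∈ M)
    {x : T} (hx : ∀ P ∈ criticalPrimes c, IsGenericMod R x P) {s : T}
    (hs : ∃ P ∈ criticalPrimes c, s ∈ P) (f g : R[X]) (hf : aeval x f ∈ nonZeroDivisors T)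
    (hg : aeval x g = aeval x f * s) : c.1 ∣ s := by
  have := wfDvdMonoid_of_isNoetherianRing_of_isLocalRing T
  induction f using (InvImage.wf (aeval (R := R) x) wellFounded_dvdNotUnit).induction
    generalizing g with
  | _ f ih =>
  have heval (f : R[X]) : aeval x (C ⟨c.1, (h.isMark c hc).mem⟩ * f) = c.1 * aeval x f := by
    rw [map_mul, aeval_C]; rfl
  obtain ⟨P, hP, hsP⟩ := hs
  obtain ⟨g, rfl⟩ := h.C_dvd_of_aeval_mem hc hP (hx P hP) (hg ▸ P.mul_mem_left _ hsP)
  rw [heval] at hg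
  by_cases hfP : ∃ P' ∈ criticalPrimes c, aeval x f ∈ P'
  · obtain ⟨P', hP', hfP'⟩ := hfP
    obtain ⟨f, rfl⟩ := h.C_dvd_of_aeval_mem hc hP' (hx P' hP') hfP'
    rw [heval, mul_mem_nonZeroDivisors] at hf
    rw [heval, mul_assoc] at hg
    have hlt : DvdNotUnit (aeval x f) (c.1 * aeval x f) :=
      ⟨nonZeroDivisors.ne_zero hf.2, c.1,
        (IsLocalRing.mem_maximalIdeal _).1 (h.isChainTop c hc).mem_maximalIdeal, mul_comm _ _⟩
    exact ih f (by rwa [InvImage, heval]) g hf.2 ((mul_cancel_left_mem_nonZeroDivisors hf.1).1 hg)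
  · push Not at hfP
    exact isRegularMod_iff_forall_associatedPrimes.2
      (fun P' hP' => hfP P' (Set.mem_insert_of_mem _ hP')) s ⟨_, hg.symm⟩

theorem isMark_fractionAdjoin [IsNoetherianRing T] (h : IsMarkedSubring k R M) (hc : c ∈ M)
    {x : T} (hx : ∀ P ∈ criticalPrimes c, IsGenericMod R x P) :
    IsMark (fractionAdjoin R x) c where
  mem := le_fractionAdjoin R x (h.isMark c hc).mem
  dvd_of_mem := by
    rintro P hP s ⟨_, ⟨f, rfl⟩, hf, ⟨g, hg⟩⟩ hsP
    exact h.fst_dvd_of_aeval_eq_mul hc hx ⟨P, hP, hsP⟩ f g hf hg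

end IsMarkedSubring

end Marks

section NewMarks

variable {T : Type u} [CommRing T] [IsLocalRing T] [IsNoetherianRing T] {k n : ℕ}
  {μ : Cardinal.{u}} {S : Subring T}

theorem exists_primeSpectrum_notMem_of_isRegularMod (hn : ringKrullDim T = n) (hn0 : 0 < n)
    {S : Set T} {q : T} (hqm : q ∈ maximalIdeal T)
    (hreg : ∀ s ∈ S, ¬ q ∣ s → IsRegularMod q s) :
    ∃ P : PrimeSpectrum T, q ∈ P.asIdeal ∧ (∀ s ∈ S, ¬ q ∣ s → s ∉ P.asIdeal) ∧
      ∃ e ≤ 1, (q = 0 → e = 0) ∧ (n : ℕ∞) ≤ Order.coheight P + (e : ℕ) := by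
  have hcoheight : ∃ e ≤ 1, (q = 0 → e = 0) ∧ ∃ P : PrimeSpectrum T,
      P.asIdeal ∈ (Ideal.span {q}).minimalPrimes ∧ (n : ℕ∞) ≤ Order.coheight P + (e : ℕ) := by
    by_cases hq0 : q = 0
    · subst hq0
      obtain ⟨P, hP, hPc⟩ := exists_mem_minimalPrimes_le_coheight (I := Ideal.span {(0 : T)})
        (k := n) (by
          rw [Ideal.span_singleton_zero,
            ringKrullDim_eq_of_ringEquiv (RingEquiv.quotientBot T), hn])
      exact ⟨0, zero_le_one, fun _ => rfl, P, hP, by simpa using hPc⟩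
    · obtain ⟨m, rfl⟩ := Nat.exists_eq_succ_of_ne_zero hn0.ne'
      obtain ⟨P, hP, hPc⟩ := exists_mem_minimalPrimes_le_coheight
        (le_ringKrullDim_quotient_span_singleton hqm hn.ge)
      exact ⟨1, le_rfl, fun h0 => absurd h0 hq0, P, hP, by push_cast; gcongr⟩
  obtain ⟨e, he, he0, P, hP, hPc⟩ := hcoheight
  refine ⟨P, hP.1.2 (Ideal.mem_span_singleton_self q), fun s hs hqs hsP => ?_, e, he, he0, hPc⟩
  obtain ⟨t, ht, hst⟩ := Ideal.exists_mul_mem_of_mem_minimalPrimes hP hsP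
  exact ht (Ideal.mem_span_singleton.2 (hreg s hs hqs t (Ideal.mem_span_singleton.1 hst)))

theorem exists_isChainTop_isMark (hn : ringKrullDim T = n) (hkn : k + 2 ≤ n) (hμ : ℵ₀ ≤ μ)
    (hμT : μ < #(ResidueField T)) (hS : #S ≤ μ) {q : T} (hqS : q ∈ S) (hqm : q ∈ maximalIdeal T)
    (hreg : ∀ s ∈ S, ¬ q ∣ s → IsRegularMod q s) :
    ∃ Q, IsChainTop k (q, Q) ∧ IsMark S (q, Q) := by
  obtain ⟨P, hqP, hSP, e, he, he0, hPc⟩ :=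
    exists_primeSpectrum_notMem_of_isRegularMod hn (by omega) hqm hreg
  obtain ⟨l, hlk, hlP, hlS, hlh⟩ := exists_ltSeries_forall_notMem_height_le hn
    (S := {s ∈ (S : Set T) | ¬ q ∣ s}) hμ hμT
    ((mk_le_mk_of_subset (Set.sep_subset _ _)).trans hS) (fun s hs => hSP s hs.1 hs.2)
    (k := k) (by omega) hPc
  refine ⟨l.last.asIdeal, ⟨hqm, ⟨l, hlk, hlP ▸ hqP, rfl⟩, hlh.trans ?_, fun h0 => ?_⟩,
    isMark_of_isRegularMod hqS hreg fun s hs hqs => hlS s ⟨hs, hqs⟩⟩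
  · exact_mod_cast Nat.add_le_add_left he k
  · simpa [he0 h0] using hlh

theorem IsMarkedSubring.exists_isFullyMarkedSubring {M : Set (T × Ideal T)}
    (h : IsMarkedSubring k S M) (hn : ringKrullDim T = n) (hkn : k + 2 ≤ n) (hμ : ℵ₀ ≤ μ)
    (hμT : μ < #(ResidueField T)) (hS : #S ≤ μ) (hM : #M ≤ μ)
    (hnew : ∀ q : S, Irreducible q → (∀ c ∈ M, ¬ c.1 ∣ (q : T)) →
      ∀ s ∈ S, ¬ (q : T) ∣ s → IsRegularMod (q : T) s) :
    ∃ M', M ⊆ M' ∧ #M' ≤ μ ∧ IsFullyMarkedSubring k S M' := by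
  let N : Set S := {q | Irreducible q ∧ ∀ c ∈ M, ¬ c.1 ∣ (q : T)}
  have hN (q : N) : ∃ Q, IsChainTop k ((q.1 : T), Q) ∧ IsMark S ((q.1 : T), Q) :=
    exists_isChainTop_isMark hn hkn hμ hμT hS q.1.2
      (h.mem_maximalIdeal_iff.2 q.2.1.not_isUnit) (hnew q q.2.1 q.2.2)
  choose Q hQtop hQmark using hN
  refine ⟨M ∪ Set.range fun q : N => ((q.1 : T), Q q), Set.subset_union_left, ?_, ?_⟩
  · exact (mk_union_le _ _).trans ((add_le_add hM (mk_range_le.trans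
      ((mk_set_le N).trans hS))).trans (add_eq_self hμ).le)
  obtain ⟨c₀, hc₀, hc₀0⟩ := h.exists_fst_eq_zero
  refine ⟨⟨h.fractionClosure_le, ?_, ?_, c₀, Or.inl hc₀, hc₀0⟩, ?_⟩
  · rintro c (hc | ⟨q, rfl⟩)
    exacts [h.isMark c hc, hQmark q]
  · rintro c (hc | ⟨q, rfl⟩)
    exacts [h.isChainTop c hc, hQtop q]
  · intro r hr hr0 hrm
    have := h.isDomain
    have := h.wfDvdMonoid
    obtain ⟨q, hq, hqr⟩ := WfDvdMonoid.exists_irreducible_factor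
      (h.mem_maximalIdeal_iff (r := ⟨r, hr⟩).1 hrm) (fun h0 => hr0 (congrArg Subtype.val h0))
    have hqr' : (q : T) ∣ r := h.coe_dvd_coe.2 hqr
    by_cases hold : ∃ c ∈ M, c.1 ∣ (q : T)
    · obtain ⟨c, hc, hcq⟩ := hold
      exact ⟨c, Or.inl hc, hcq.trans hqr'⟩
    · push Not at hold
      exact ⟨_, Or.inr ⟨⟨q, hq, hold⟩, rfl⟩, hqr'⟩

end NewMarks

section Irreducible

open Polynomial in
theorem exists_mem_span_pair_dvd_C_mul {R : Type*} [CommRing R] [IsDomain R] (F G : R[X]) :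
    ∃ ρ : R, ρ ≠ 0 ∧ ∃ D ∈ Ideal.span {F, G}, D ∣ C ρ * F ∧ D ∣ C ρ * G := by
  classical
  let K := FractionRing R
  let := Polynomial.algebra R K
  have := Polynomial.isLocalization (nonZeroDivisors R) K
  let φ := algebraMap R[X] K[X]
  obtain ⟨E₁, hE₁⟩ := EuclideanDomain.gcd_dvd_left (φ F) (φ G)
  obtain ⟨E₂, hE₂⟩ := EuclideanDomain.gcd_dvd_right (φ F) (φ G)
  have hD := EuclideanDomain.gcd_eq_gcd_ab (φ F) (φ G)
  obtain ⟨⟨_, b, hb, rfl⟩, hint⟩ := IsLocalization.exist_integer_multiples_of_finset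
    ((nonZeroDivisors R).map C) {E₁, E₂, EuclideanDomain.gcdA (φ F) (φ G),
      EuclideanDomain.gcdB (φ F) (φ G)}
  simp only [Finset.forall_mem_insert, Finset.mem_singleton, forall_eq] at hint
  obtain ⟨⟨E₁', hE₁'⟩, ⟨E₂', hE₂'⟩, ⟨U, hU⟩, V, hV⟩ := hint
  rw [Algebra.smul_def] at hE₁' hE₂' hU hV
  have hinj : Function.Injective φ := Polynomial.map_injective _ (IsFractionRing.injective R K)
  have hcomb : φ (U * F + V * G) = φ (C b) * EuclideanDomain.gcd (φ F) (φ G) := by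
    rw [map_add, map_mul, map_mul, hU, hV]
    linear_combination -φ (C b) * hD
  refine ⟨b * b, mul_ne_zero (nonZeroDivisors.ne_zero hb) (nonZeroDivisors.ne_zero hb),
    U * F + V * G, Ideal.mem_span_pair.2 ⟨U, V, rfl⟩, ⟨E₁', hinj ?_⟩, ⟨E₂', hinj ?_⟩⟩ <;>
  rw [map_mul φ (U * F + V * G), hcomb, C_mul, map_mul, map_mul]
  · rw [hE₁']
    linear_combination φ (C b) ^ 2 * hE₁
  · rw [hE₂']
    linear_combination φ (C b) ^ 2 * hE₂

theorem dvd_or_dvd_mul_of_irreducible {S : Type*} [CommRing S] [IsDomain S] {q ρ s h e₁ e₂ : S}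
    (hq : Irreducible q) (hρ0 : ρ ≠ 0) (hρ : IsPrimal ρ) (h₁ : ρ * s = h * e₁)
    (h₂ : ρ * q = h * e₂) : h ∣ ρ ∨ q ∣ ρ * s := by
  obtain ⟨r, r', ⟨a, rfl⟩, ⟨e, rfl⟩, rfl⟩ := hρ ⟨q, h₂.symm⟩
  have hqae : q = a * e := mul_left_cancel₀ hρ0 (by linear_combination h₂)
  rcases hq.isUnit_or_isUnit hqae with ha | he
  · exact Or.inl (ha.mul_right_dvd.2 (dvd_mul_right r r'))
  · refine Or.inr (h₁ ▸ Dvd.dvd.mul_right (Dvd.dvd.mul_left ?_ r) e₁)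
    exact hqae ▸ he.mul_right_dvd.2 dvd_rfl

theorem isRegularMod_of_irreducible_of_bezout {T B : Type*} [CommRing T] [CommRing B] (φ : B →+* T)
    {S : Subring T} [IsDomain S] (hB : φ.range ≤ S) (hS : S ≤ fractionClosure φ.range) {q : S}
    (hq : Irreducible q)
    (hbez : ∀ F G : B, ∃ ρ : S, ρ ≠ 0 ∧ IsPrimal ρ ∧ IsRegularMod (q : T) ρ ∧
      ∃ D ∈ Ideal.span {F, G}, ∃ E₁ E₂, ρ * φ F = φ D * φ E₁ ∧ ρ * φ G = φ D * φ E₂)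
    {s : T} (hs : s ∈ S) (hqs : ¬ (q : T) ∣ s) : IsRegularMod (q : T) s := by
  obtain ⟨a₁, ⟨b₁, rfl⟩, ha₁, c₁, hc₁⟩ := hS hs
  obtain ⟨a₂, ⟨b₂, rfl⟩, ha₂, c₂, hc₂⟩ := hS q.2
  obtain ⟨ρ, hρ0, hρ, hqρ, D, hD, E₁, E₂, h₁, h₂⟩ := hbez (b₂ * c₁) (b₁ * c₂)
  obtain ⟨U, V, rfl⟩ := Ideal.mem_span_pair.1 hD
  simp only [map_mul, map_add, hc₁, hc₂] at h₁ h₂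
  have hmem (b : B) : φ b ∈ S := hB ⟨b, rfl⟩
  let h : S := ⟨φ U, hmem U⟩ * ⟨s, hs⟩ + ⟨φ V, hmem V⟩ * q
  have hcancel := fun x y => (mul_cancel_left_mem_nonZeroDivisors (x := x) (y := y)
    (mul_mem ha₁ ha₂)).1
  have hs' : ρ * ⟨s, hs⟩ = h * ⟨φ E₁, hmem E₁⟩ :=
    Subtype.ext (hcancel _ _ (by push_cast [h]; linear_combination h₁))
  have hq' : ρ * q = h * ⟨φ E₂, hmem E₂⟩ :=
    Subtype.ext (hcancel _ _ (by push_cast [h]; linear_combination h₂))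
  rcases dvd_or_dvd_mul_of_irreducible hq hρ0 hρ hs' hq' with ⟨r, rfl⟩ | hqρs
  · intro t ht
    refine hqρ t ?_
    have : (q : T) ∣ h * t := by
      rw [show (h : T) * t = φ U * (s * t) + q * (φ V * t) by push_cast [h]; ring]
      exact dvd_add (ht.mul_left _) (dvd_mul_right _ _)
    rw [Subring.coe_mul, mul_right_comm]
    exact this.mul_right _
  · exact absurd (hqρ s (map_dvd S.subtype hqρs)) hqs

end Irreducible

section Extension

variable {T : Type u} [CommRing T] [IsLocalRing T] [IsNoetherianRing T] {k n : ℕ}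
  {μ : Cardinal.{u}} {R S : Subring T} {M : Set (T × Ideal T)}

theorem IsMarkedSubring.prime_fst (h : IsMarkedSubring k S M) {c : T × Ideal T} (hc : c ∈ M)
    (hc0 : c.1 ≠ 0) : Prime (⟨c.1, (h.isMark c hc).mem⟩ : S) := by
  have hcm := (h.isChainTop c hc).mem_maximalIdeal
  refine ⟨fun h0 => hc0 (congrArg Subtype.val h0), h.mem_maximalIdeal_iff.1 hcm, fun a b hab => ?_⟩
  simp only [← h.coe_dvd_coe] at hab ⊢
  refine or_iff_not_imp_left.2 fun hca => ?_
  exact (h.isMark c hc).isRegularMod a.2 hca b hab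

theorem IsFullyMarkedSubring.induction (h : IsFullyMarkedSubring k R M) {p : T → Prop}
    (hunit : ∀ u ∈ R, IsUnit u → p u) (hmul : ∀ c ∈ M, c.1 ≠ 0 → ∀ r ∈ R, p r → p (c.1 * r))
    {r : T} (hr : r ∈ R) (hr0 : r ≠ 0) : p r := by
  have := wfDvdMonoid_of_isNoetherianRing_of_isLocalRing T
  induction r using (wellFounded_dvdNotUnit (α := T)).induction with
  | _ r ih =>
  by_cases hrm : r ∈ maximalIdeal T
  · obtain ⟨c, hc, r, rfl⟩ := h.exists_fst_dvd r hr hr0 hrm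
    have hc0 := left_ne_zero_of_mul hr0
    have hr' := h.mem_of_mul_mem (h.isMark c hc).mem hc0 hr
    have hlt : DvdNotUnit r (c.1 * r) := ⟨right_ne_zero_of_mul hr0, c.1,
      (IsLocalRing.mem_maximalIdeal _).1 (h.isChainTop c hc).mem_maximalIdeal, mul_comm _ _⟩
    exact hmul c hc hc0 r hr' (ih r hlt hr' (right_ne_zero_of_mul hr0))
  · exact hunit r hr (not_not.1 hrm)

theorem IsFullyMarkedSubring.isPrimal (h : IsFullyMarkedSubring k R M)
    (hS : IsMarkedSubring k S M) (hRS : R ≤ S) {r : T} (hr : r ∈ R) (hr0 : r ≠ 0) :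
    IsPrimal (⟨r, hRS hr⟩ : S) := by
  have := hS.isDomain
  have := hS.isLocalHom_subtype
  refine h.induction (p := fun r => ∀ hrS : r ∈ S, IsPrimal (⟨r, hrS⟩ : S))
    (fun u _ hu huS => (isUnit_of_map_unit S.subtype ⟨u, huS⟩ hu).isPrimal)
    (fun c hc hc0 r hr ih _ => ?_) hr hr0 (hRS hr)
  exact (hS.prime_fst hc hc0).isPrimal.mul (ih (hRS hr))

theorem IsFullyMarkedSubring.isRegularMod (h : IsFullyMarkedSubring k R M) {q : T}
    (hq : ∀ c ∈ M, IsRegularMod c.1 q) {r : T} (hr : r ∈ R) (hr0 : r ≠ 0) : IsRegularMod q r :=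
  h.induction (fun _ _ hu => .of_isUnit hu) (fun c hc hc0 _ _ ih =>
    ((hq c hc).symm (h.mem_nonZeroDivisors (h.isMark c hc).mem hc0)).mul ih) hr hr0

theorem IsFullyMarkedSubring.isMarkedSubring_fractionAdjoin (h : IsFullyMarkedSubring k R M)
    (hx : ∀ c ∈ M, ∃ x, S = fractionAdjoin R x ∧ ∀ P ∈ criticalPrimes c, IsGenericMod R x P) :
    IsMarkedSubring k S M where
  fractionClosure_le := by
    obtain ⟨c, hc, -⟩ := h.exists_fst_eq_zero
    obtain ⟨x, rfl, -⟩ := hx c hc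
    exact fractionClosure_fractionAdjoin_le R x
  isMark c hc := by
    obtain ⟨x, rfl, hgen⟩ := hx c hc
    exact h.isMark_fractionAdjoin hc hgen
  isChainTop := h.isChainTop
  exists_fst_eq_zero := h.exists_fst_eq_zero

theorem IsFullyMarkedSubring.isRegularMod_of_irreducible (h : IsFullyMarkedSubring k R M) {x : T}
    (hS : IsMarkedSubring k (fractionAdjoin R x) M) {q : fractionAdjoin R x} (hq : Irreducible q)
    (hqM : ∀ c ∈ M, ¬ c.1 ∣ (q : T)) {s : T} (hs : s ∈ fractionAdjoin R x) (hqs : ¬ (q : T) ∣ s) :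
    IsRegularMod (q : T) s := by
  have := h.isDomain
  have := hS.isDomain
  refine isRegularMod_of_irreducible_of_bezout (S := fractionAdjoin R x)
    (Polynomial.aeval (R := R) x).toRingHom (le_fractionClosure _) le_rfl hq (fun F G => ?_) hs hqs
  obtain ⟨ρ, hρ0, D, hD, ⟨E₁, hE₁⟩, ⟨E₂, hE₂⟩⟩ := exists_mem_span_pair_dvd_C_mul F G
  have hρ0' : (ρ : T) ≠ 0 := fun h0 => hρ0 (Subtype.ext h0)
  refine ⟨⟨ρ, le_fractionAdjoin R x ρ.2⟩, fun h0 => hρ0' (congrArg Subtype.val h0),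
    h.isPrimal hS (le_fractionAdjoin R x) ρ.2 hρ0',
    h.isRegularMod (fun c hc => (hS.isMark c hc).isRegularMod q.2 (hqM c hc)) ρ.2 hρ0',
    D, hD, E₁, E₂, ?_, ?_⟩
  · simpa [Subring.smul_def, Polynomial.aeval_C, Algebra.algebraMap_eq_smul_one] using
      congrArg (Polynomial.aeval x) hE₁
  · simpa [Subring.smul_def, Polynomial.aeval_C, Algebra.algebraMap_eq_smul_one] using
      congrArg (Polynomial.aeval x) hE₂

theorem IsFullyMarkedSubring.exists_fractionAdjoin (h : IsFullyMarkedSubring k R M)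
    (hn : ringKrullDim T = n) (hkn : k + 2 ≤ n) (hμ : ℵ₀ ≤ μ) (hμT : μ < #(ResidueField T))
    (hR : #R ≤ μ) (hM : #M ≤ μ)
    (hx : ∀ c ∈ M, ∃ x, S = fractionAdjoin R x ∧ ∀ P ∈ criticalPrimes c, IsGenericMod R x P) :
    #S ≤ μ ∧ ∃ M', M ⊆ M' ∧ #M' ≤ μ ∧ IsFullyMarkedSubring k S M' := by
  have hS := h.isMarkedSubring_fractionAdjoin hx
  obtain ⟨c, hc, -⟩ := h.exists_fst_eq_zero
  obtain ⟨x, rfl, -⟩ := hx c hc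
  have hScard := mk_fractionAdjoin_le hμ hR x
  exact ⟨hScard, hS.exists_isFullyMarkedSubring hn hkn hμ hμT hScard hM
    fun q hq hqM s hs hqs => h.isRegularMod_of_irreducible hS hq hqM hs hqs⟩

theorem exists_isFullyMarkedSubring (hn : ringKrullDim T = n) (hkn : k + 2 ≤ n)
    (hT : ℵ₀ < #(ResidueField T)) (hint : ∀ z : ℤ, z ≠ 0 → (z : T) ∈ nonZeroDivisors T) :
    ∃ (R : Subring T) (M : Set (T × Ideal T)),
      #R ≤ ℵ₀ ∧ #M ≤ ℵ₀ ∧ IsFullyMarkedSubring k R M := by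
  let φ := Int.castRingHom T
  let R := fractionClosure φ.range
  have hR : #R ≤ ℵ₀ := mk_fractionClosure_le le_rfl
    (le_aleph0_iff_set_countable.2 (Set.countable_range φ))
  have hreg : ∀ s ∈ R, s ≠ 0 → s ∈ nonZeroDivisors T := by
    rintro s ⟨a, -, ha, z, hz : (z : T) = a * s⟩ hs0
    have hz0 : z ≠ 0 := by
      rintro rfl
      exact hs0 ((mul_left_mem_nonZeroDivisors_eq_zero_iff ha).1 (by rw [← hz, Int.cast_zero]))
    exact (mul_mem_nonZeroDivisors.1 (hz ▸ hint z hz0)).2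
  obtain ⟨Q, hQtop, hQ⟩ := exists_isChainTop_isMark hn hkn le_rfl hT hR R.zero_mem
    (maximalIdeal T).zero_mem
    fun s hs hs0 => isRegularMod_zero_iff.2 (hreg s hs (by rwa [zero_dvd_iff] at hs0))
  have h : IsMarkedSubring k R {((0 : T), Q)} := by
    refine ⟨fractionClosure_fractionClosure_le _, ?_, ?_, _, rfl, rfl⟩ <;> rintro _ rfl
    exacts [hQ, hQtop]
  have := h.isDomain
  have hnew (q : R) (hq : Irreducible q) {s : T} : s ∈ R → ¬ (q : T) ∣ s →
      IsRegularMod (q : T) s := by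
    refine isRegularMod_of_irreducible_of_bezout φ (le_fractionClosure _) le_rfl hq fun F G => ?_
    obtain ⟨E₁, hE₁⟩ := EuclideanDomain.gcd_dvd_left F G
    obtain ⟨E₂, hE₂⟩ := EuclideanDomain.gcd_dvd_right F G
    refine ⟨1, one_ne_zero, isUnit_one.isPrimal, .of_isUnit isUnit_one, EuclideanDomain.gcd F G,
      EuclideanDomain.span_gcd F G ▸ Ideal.mem_span_singleton_self _, E₁, E₂, ?_, ?_⟩
    · simpa using congrArg φ hE₁
    · simpa using congrArg φ hE₂
  obtain ⟨M, -, hM, hRM⟩ := h.exists_isFullyMarkedSubring hn hkn le_rfl hT hR (by simp)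
    fun q hq _ s => hnew q hq
  exact ⟨R, M, hR, hM, hRM⟩

end Extension

section Steps

/-- The hypotheses on `T` under which the construction runs: `T` has dimension `n ≥ k + 2`, the
associated primes of `T` have height at most `k`, and those of `T / zT` with `z` regular have
height at most `k + 1`. The number `d` of the main theorem is `k + 1`. -/
structure HasBoundedAssociatedPrimes (T : Type*) [CommRing T] (k n : ℕ) : Prop where
  ringKrullDim_eq : ringKrullDim T = n
  add_two_le : k + 2 ≤ n
  height_le_of_mem_span_zero : ∀ P ∈ associatedPrimes T (T ⧸ Ideal.span {(0 : T)}), P.height ≤ k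
  height_le : ∀ z ∈ nonZeroDivisors T, ∀ P ∈ associatedPrimes T (T ⧸ Ideal.span {z}),
    P.height ≤ (k + 1 : ℕ)

/-- A stage of the construction: a fully marked subring of cardinality at most `μ`, with at most
`μ` marks. -/
structure IsStage {T : Type u} [CommRing T] [IsLocalRing T] (k : ℕ) (μ : Cardinal.{u})
    (X : Subring T × Set (T × Ideal T)) : Prop where
  isFullyMarkedSubring : IsFullyMarkedSubring k X.1 X.2
  mk_fst_le : #X.1 ≤ μ
  mk_snd_le : #X.2 ≤ μ

theorem mk_iUnion_criticalPrimes_le {T : Type u} [CommRing T] [IsNoetherianRing T]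
    {μ : Cardinal.{u}} (hμ : ℵ₀ ≤ μ) {M : Set (T × Ideal T)} (hM : #M ≤ μ) :
    #(⋃ c : M, criticalPrimes c.1) ≤ μ := by
  have hc (c : M) : #(criticalPrimes c.1) ≤ μ :=
    (lt_aleph0_iff_set_finite.2 (finite_criticalPrimes c.1)).le.trans hμ
  calc #(⋃ c : M, criticalPrimes c.1) ≤ #M * ⨆ c : M, #(criticalPrimes c.1) := mk_iUnion_le _
    _ ≤ μ * μ := mul_le_mul' hM (ciSup_le' hc)
    _ = μ := mul_eq_self hμ

variable {T : Type u} [CommRing T] [IsLocalRing T] {k n : ℕ} {μ : Cardinal.{u}}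
  {X : Subring T × Set (T × Ideal T)}

theorem HasBoundedAssociatedPrimes.height_le_of_mem_criticalPrimes_of_eq_zero
    (hT : HasBoundedAssociatedPrimes T k n) {c : T × Ideal T} (hc : IsChainTop k c)
    (hc0 : c.1 = 0) {P : Ideal T} (hP : P ∈ criticalPrimes c) : P.height ≤ k := by
  rcases hP with rfl | hP
  · exact hc.height_le_of_eq_zero hc0
  · exact hT.height_le_of_mem_span_zero P (hc0 ▸ hP)

variable [IsNoetherianRing T]

theorem IsStage.height_le_of_mem_criticalPrimes (hX : IsStage k μ X)
    (hT : HasBoundedAssociatedPrimes T k n) {c : T × Ideal T} (hc : c ∈ X.2) {P : Ideal T}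
    (hP : P ∈ criticalPrimes c) : P.height ≤ (k + 1 : ℕ) := by
  have h := hX.isFullyMarkedSubring
  by_cases hc0 : c.1 = 0
  · exact (hT.height_le_of_mem_criticalPrimes_of_eq_zero (h.isChainTop c hc) hc0 hP).trans
      (by exact_mod_cast k.le_succ)
  rcases hP with rfl | hP
  · exact (h.isChainTop c hc).height_le
  · exact hT.height_le _ (h.mem_nonZeroDivisors (h.isMark c hc).mem hc0) P hP

theorem IsStage.exists_mem_forall_isGenericMod (hX : IsStage k μ X) (hμ : ℵ₀ ≤ μ)
    (hμT : μ < #(ResidueField T)) {J : Ideal T} {E : Set (Ideal T)} (hE : E.Finite)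
    (hEp : ∀ P ∈ E, P.IsPrime) (hEJ : ∀ P ∈ E, ¬ J ≤ P)
    (hJ : ∀ c ∈ X.2, ∀ P ∈ criticalPrimes c, ¬ J ≤ P) {B : Set (T × T)} (hB : B.Finite) :
    ∃ u ∈ J, (∀ P ∈ E, ∀ b ∈ B, b.2 ∉ P → IsGenericMod X.1 (b.1 + b.2 * u) P) ∧
      ∀ c ∈ X.2, ∀ P ∈ criticalPrimes c, ∀ b ∈ B, b.2 ∉ P →
        IsGenericMod X.1 (b.1 + b.2 * u) P := by
  have hcard {α : Type u} {s : Set α} (hs : s.Finite) : #s ≤ μ :=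
    (lt_aleph0_iff_set_finite.2 hs).le.trans hμ
  obtain ⟨u, hu, hgen⟩ := _root_.exists_mem_forall_isGenericMod X.1 J
    (E ∪ ⋃ c : X.2, criticalPrimes c.1) B hμ hμT hX.mk_fst_le
    ((mk_union_le _ _).trans ((add_le_add (hcard hE)
      (mk_iUnion_criticalPrimes_le hμ hX.mk_snd_le)).trans (add_eq_self hμ).le)) (hcard hB)
    (by
      rintro P (hP | hP)
      · exact hEp P hP
      · obtain ⟨⟨c, hc⟩, hP⟩ := Set.mem_iUnion.1 hP
        exact (hX.isFullyMarkedSubring.isChainTop c hc).isPrime_of_mem_criticalPrimes hP)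
    (by
      rintro P (hP | hP)
      · exact hEJ P hP
      · obtain ⟨⟨c, hc⟩, hP⟩ := Set.mem_iUnion.1 hP
        exact hJ c hc P hP)
  exact ⟨u, hu, fun P hP => hgen P (Or.inl hP),
    fun c hc P hP => hgen P (Or.inr (Set.mem_iUnion.2 ⟨⟨c, hc⟩, hP⟩))⟩

theorem IsStage.exists_ge_fst_eq (hX : IsStage k μ X) (hT : HasBoundedAssociatedPrimes T k n)
    (hμ : ℵ₀ ≤ μ) (hμT : μ < #(ResidueField T)) {S : Subring T}
    (hS : ∀ c ∈ X.2, ∃ x, S = fractionAdjoin X.1 x ∧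
      ∀ P ∈ criticalPrimes c, IsGenericMod X.1 x P) :
    ∃ Y, X ≤ Y ∧ IsStage k μ Y ∧ Y.1 = S := by
  have h := hX.isFullyMarkedSubring
  obtain ⟨hScard, M, hXM, hM, hSM⟩ := h.exists_fractionAdjoin hT.ringKrullDim_eq hT.add_two_le hμ
    hμT hX.mk_fst_le hX.mk_snd_le hS
  obtain ⟨c, hc, -⟩ := h.exists_fst_eq_zero
  obtain ⟨x, rfl, -⟩ := hS c hc
  exact ⟨(fractionAdjoin X.1 x, M), ⟨le_fractionAdjoin _ x, hXM⟩, ⟨hSM, hScard, hM⟩, rfl⟩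

theorem IsStage.exists_ge_sub_mem (hX : IsStage k μ X) (hT : HasBoundedAssociatedPrimes T k n)
    (hμ : ℵ₀ ≤ μ) (hμT : μ < #(ResidueField T)) {J : Ideal T} (t : T) {E : Set (Ideal T)}
    (hE : E.Finite) (hEp : ∀ P ∈ E, P.IsPrime) (hEJ : ∀ P ∈ E, ¬ J ≤ P)
    (hJ : ∀ c ∈ X.2, ∀ P ∈ criticalPrimes c, ¬ J ≤ P) :
    ∃ Y, X ≤ Y ∧ IsStage k μ Y ∧ ∃ x ∈ Y.1, x ≠ 0 ∧ x - t ∈ J ∧ ∀ P ∈ E, x ∉ P := by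
  have h := hX.isFullyMarkedSubring
  obtain ⟨u, hu, hgenE, hgen⟩ := hX.exists_mem_forall_isGenericMod hμ hμT hE hEp hEJ hJ
    (Set.finite_singleton (t, (1 : T)))
  simp only [Set.mem_singleton_iff, forall_eq, one_mul] at hgenE hgen
  have hnotMem {P : Ideal T} (hP : P.IsPrime) (hgenP : IsGenericMod X.1 (t + u) P) : t + u ∉ P :=
    fun hx => hP.one_notMem (by simpa using hgenP Polynomial.X (by simpa using hx) 1)
  obtain ⟨Y, hXY, hY, hYS⟩ := hX.exists_ge_fst_eq hT hμ hμT (S := fractionAdjoin X.1 (t + u))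
    fun c hc => ⟨t + u, rfl, fun P hP => hgen c hc P hP
      ((h.isChainTop c hc).isPrime_of_mem_criticalPrimes hP).one_notMem⟩
  refine ⟨Y, hXY, hY, t + u, hYS ▸ self_mem_fractionAdjoin _ _, fun h0 => ?_, by simpa using hu,
    fun P hP => hnotMem (hEp P hP) (hgenE P hP (hEp P hP).one_notMem)⟩
  obtain ⟨c, hc, -⟩ := h.exists_fst_eq_zero
  have hQ := (h.isChainTop c hc).isPrime
  exact hnotMem hQ (hgen c hc _ (Set.mem_insert _ _) hQ.one_notMem) (h0 ▸ c.2.zero_mem)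

theorem IsStage.exists_ge_sub_mem_maximalIdeal_sq (hX : IsStage k μ X)
    (hT : HasBoundedAssociatedPrimes T k n) (hμ : ℵ₀ ≤ μ) (hμT : μ < #(ResidueField T)) (t : T) :
    ∃ Y, X ≤ Y ∧ IsStage k μ Y ∧ ∃ x ∈ Y.1, x - t ∈ maximalIdeal T ^ 2 := by
  have hJ : ∀ c ∈ X.2, ∀ P ∈ criticalPrimes c, ¬ maximalIdeal T ^ 2 ≤ P := by
    intro c hc P hP hle
    have hPp := (hX.isFullyMarkedSubring.isChainTop c hc).isPrime_of_mem_criticalPrimes hP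
    have hheight := (Ideal.height_mono (hPp.le_of_pow_le hle)).trans
      (hX.height_le_of_mem_criticalPrimes hT hc hP)
    have hdim := maximalIdeal_height_eq_ringKrullDim (R := T)
    rw [hT.ringKrullDim_eq] at hdim
    have hnk : (n : ℕ∞) ≤ (k + 1 : ℕ) := (WithBot.coe_injective hdim).symm.le.trans hheight
    have := hT.add_two_le
    norm_cast at hnk
    omega
  obtain ⟨Y, hXY, hY, x, hx, -, hxt, -⟩ := hX.exists_ge_sub_mem hT hμ hμT t Set.finite_empty
    (by simp) (by simp) hJ
  exact ⟨Y, hXY, hY, x, hx, hxt⟩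

theorem IsStage.exists_ge_mem_of_le_height (hX : IsStage k μ X)
    (hT : HasBoundedAssociatedPrimes T k n) (hμ : ℵ₀ ≤ μ) (hμT : μ < #(ResidueField T))
    {P : Ideal T} (hP : P.IsPrime) (hPh : (k + 1 : ℕ) ≤ P.height) :
    ∃ Y, X ≤ Y ∧ IsStage k μ Y ∧ ∃ x ∈ Y.1, x ≠ 0 ∧ x ∈ P := by
  by_cases hXP : ∃ x ∈ X.1, x ≠ 0 ∧ x ∈ P
  · exact ⟨X, le_rfl, hX, hXP⟩
  have hJ : ∀ c ∈ X.2, ∀ Q ∈ criticalPrimes c, ¬ P ≤ Q := by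
    intro c hc Q hQ hle
    have h := hX.isFullyMarkedSubring
    by_cases hc0 : c.1 = 0
    · have hkk := (hPh.trans (Ideal.height_mono hle)).trans
        (hT.height_le_of_mem_criticalPrimes_of_eq_zero (h.isChainTop c hc) hc0 hQ)
      norm_cast at hkk
      omega
    · have hPQ : P = Q := Ideal.eq_of_le_of_height_le P hle
        ((hX.height_le_of_mem_criticalPrimes hT hc hQ).trans hPh)
      exact hXP ⟨c.1, (h.isMark c hc).mem, hc0,
        hPQ ▸ (h.isChainTop c hc).fst_mem_of_mem_criticalPrimes hQ⟩
  obtain ⟨Y, hXY, hY, x, hx, hx0, hxP, -⟩ := hX.exists_ge_sub_mem hT hμ hμT 0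
    Set.finite_empty (by simp) (by simp) hJ
  exact ⟨Y, hXY, hY, x, hx, hx0, by simpa using hxP⟩

theorem IsStage.exists_ge_isRegularMod (hX : IsStage k μ X)
    (hT : HasBoundedAssociatedPrimes T k n) (hμ : ℵ₀ ≤ μ) (hμT : μ < #(ResidueField T))
    {P : Ideal T} (hPh : (k + 2 : ℕ) ≤ P.height) :
    ∃ Y, X ≤ Y ∧ IsStage k μ Y ∧
      ∃ x ∈ Y.1, ∃ y ∈ Y.1, x ≠ 0 ∧ x ∈ P ∧ y ∈ P ∧ IsRegularMod x y := by
  have hnle {Q : Ideal T} (hQ : Q.height ≤ (k + 1 : ℕ)) : ¬ P ≤ Q := fun hle => by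
    have := (hPh.trans (Ideal.height_mono hle)).trans hQ
    norm_cast at this
    omega
  obtain ⟨Y, hXY, hY, x, hx, hx0, hxP, -⟩ := hX.exists_ge_sub_mem hT hμ hμT (J := P) 0
    Set.finite_empty (by simp) (by simp)
    fun c hc Q hQ => hnle (hX.height_le_of_mem_criticalPrimes hT hc hQ)
  have hxreg := hY.isFullyMarkedSubring.mem_nonZeroDivisors hx hx0
  obtain ⟨Z, hYZ, hZ, y, hy, -, hyP, hyx⟩ := hY.exists_ge_sub_mem hT hμ hμT (J := P) 0
    (associatedPrimes.finite T (T ⧸ Ideal.span {x})) (fun Q hQ => hQ.isPrime)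
    (fun Q hQ => hnle (hT.height_le x hxreg Q hQ))
    fun c hc Q hQ => hnle (hY.height_le_of_mem_criticalPrimes hT hc hQ)
  exact ⟨Z, hXY.trans hYZ, hZ, x, hYZ.1 hx, y, hy, hx0, by simpa using hxP, by simpa using hyP,
    isRegularMod_iff_forall_associatedPrimes.2 hyx⟩

end Steps

theorem fractionAdjoin_le_fractionAdjoin_of_mul_add_mem {T : Type u} [CommRing T] {R : Subring T}
    {a b x y : T} (ha : a ∈ R) (hb : b ∈ R) (hbreg : b ∈ nonZeroDivisors T)
    (h : a * x + b * y ∈ R) : fractionAdjoin R y ≤ fractionAdjoin R x := by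
  have hmem : b * y ∈ fractionAdjoin R x := by
    rw [← add_sub_cancel_left (a * x) (b * y)]
    exact sub_mem (le_fractionAdjoin R x h)
      (mul_mem (le_fractionAdjoin R x ha) (self_mem_fractionAdjoin R x))
  exact fractionAdjoin_le (fractionClosure_fractionAdjoin_le R x) (le_fractionAdjoin R x)
    (fractionClosure_fractionAdjoin_le R x ⟨b, le_fractionAdjoin R x hb, hbreg, hmem⟩)

theorem mem_span_image_iff_of_eq_mul {A T ι : Type*} [CommSemiring A] [CommSemiring T]
    [Algebra A T] {g : T} {y z : ι → T} {s : Set ι} (hyz : ∀ i ∈ s, y i = g * z i) {x : T} :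
    x ∈ Submodule.span A (y '' s) ↔ ∃ w ∈ Submodule.span A (z '' s), g * w = x := by
  have himage : y '' s = LinearMap.mulLeft A g '' (z '' s) := by
    rw [Set.image_image]
    exact Set.image_congr hyz
  rw [himage, ← Submodule.map_span]
  rfl

section LinearEquations

variable {T : Type u} [CommRing T] [IsLocalRing T] [IsNoetherianRing T] {k n : ℕ}
  {μ : Cardinal.{u}} {R : Subring T} {M : Set (T × Ideal T)} {X : Subring T × Set (T × Ideal T)}
  {ι : Type*} {s : Finset ι} {y : ι → T}

theorem IsFullyMarkedSubring.uniqueFactorizationMonoid (h : IsFullyMarkedSubring k R M) :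
    UniqueFactorizationMonoid R := by
  have := h.isDomain
  have := h.wfDvdMonoid
  have : DecompositionMonoid R := ⟨fun a => by
    by_cases ha : a = 0
    · exact ha ▸ isPrimal_zero
    · exact h.isPrimal h.toIsMarkedSubring le_rfl a.2 fun h0 => ha (Subtype.ext h0)⟩
  exact ufm_of_decomposition_of_wfDvdMonoid

theorem IsMarkedSubring.not_isUnit_of_fst_dvd (h : IsMarkedSubring k R M) {c : T × Ideal T}
    (hc : c ∈ M) {r : R} (hcr : c.1 ∣ (r : T)) : ¬ IsUnit r :=
  h.mem_maximalIdeal_iff.1 (Ideal.mem_of_dvd _ hcr (h.isChainTop c hc).mem_maximalIdeal)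

theorem IsFullyMarkedSubring.exists_content (h : IsFullyMarkedSubring k R M)
    (hy : ∀ i ∈ s, y i ∈ R) (hy0 : ∃ i ∈ s, y i ≠ 0) : ∃ g ∈ R, g ≠ 0 ∧ ∃ z : ι → T,
    (∀ i ∈ s, z i ∈ R ∧ y i = g * z i) ∧ ∀ c ∈ M, ∃ i ∈ s, ¬ c.1 ∣ z i := by
  classical
  have := h.isDomain
  have := h.uniqueFactorizationMonoid
  obtain ⟨_⟩ : Nonempty (NormalizedGCDMonoid R) := inferInstance
  obtain ⟨i₀, hi₀, hyi₀⟩ := hy0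
  choose! f hf using fun i (hi : i ∈ s) => (⟨⟨y i, hy i hi⟩, rfl⟩ : ∃ r : R, (r : T) = y i)
  obtain ⟨z, hz, hgcd⟩ := Finset.extract_gcd f ⟨i₀, hi₀⟩
  refine ⟨(s.gcd f : R), (s.gcd f).2, fun h0 => hyi₀ ?_, fun i => z i, fun i hi => ⟨(z i).2, ?_⟩,
    fun c hc => ?_⟩
  · rw [← hf i₀ hi₀, hz i₀ hi₀, Subring.coe_mul, h0, zero_mul]
  · rw [← hf i hi, hz i hi, Subring.coe_mul]
  · by_contra! hdvd
    have hc1 : (⟨c.1, (h.isMark c hc).mem⟩ : R) ∣ 1 := hgcd ▸ Finset.dvd_gcd fun i hi =>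
      h.coe_dvd_coe.1 (hdvd i hi)
    exact h.not_isUnit_of_fst_dvd hc (h.coe_dvd_coe.2 hc1) isUnit_one

theorem IsStage.exists_ge_add_mul_mem (hX : IsStage k μ X) (hT : HasBoundedAssociatedPrimes T k n)
    (hμ : ℵ₀ ≤ μ) (hμT : μ < #(ResidueField T)) {a b t₁ t₂ : T} (ha : a ∈ X.1) (ha0 : a ≠ 0)
    (hb : b ∈ X.1) (hb0 : b ≠ 0) (hab : ∀ c ∈ X.2, ¬ c.1 ∣ a ∨ ¬ c.1 ∣ b)
    (ht : a * t₁ + b * t₂ ∈ X.1) {J : Ideal T}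
    (hJ : ∀ c ∈ X.2, ∀ P ∈ criticalPrimes c, ¬ J ≤ P) :
    ∃ Y, X ≤ Y ∧ IsStage k μ Y ∧ ∃ u ∈ J, t₁ + b * u ∈ Y.1 ∧ t₂ - a * u ∈ Y.1 := by
  have h := hX.isFullyMarkedSubring
  obtain ⟨u, hu, -, hgen⟩ := hX.exists_mem_forall_isGenericMod hμ hμT Set.finite_empty
    (by simp) (by simp) hJ (B := {(t₁, b), (t₂, -a)}) (Set.toFinite _)
  simp only [Set.mem_insert_iff, Set.mem_singleton_iff, forall_eq_or_imp, forall_eq, neg_mul,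
    ← sub_eq_add_neg, neg_mem_iff] at hgen
  have hrel : a * (t₁ + b * u) + b * (t₂ - a * u) ∈ X.1 := by convert ht using 1; ring
  have heq : fractionAdjoin X.1 (t₁ + b * u) = fractionAdjoin X.1 (t₂ - a * u) :=
    le_antisymm
      (fractionAdjoin_le_fractionAdjoin_of_mul_add_mem hb ha (h.mem_nonZeroDivisors ha ha0)
        (add_comm (a * _) _ ▸ hrel))
      (fractionAdjoin_le_fractionAdjoin_of_mul_add_mem ha hb (h.mem_nonZeroDivisors hb hb0) hrel)
  obtain ⟨Y, hXY, hY, hYS⟩ := hX.exists_ge_fst_eq hT hμ hμT (S := fractionAdjoin X.1 (t₁ + b * u))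
    fun c hc => by
      rcases hab c hc with hca | hcb
      · exact ⟨_, heq, fun P hP =>
          (hgen c hc P hP).2 (mt ((h.isMark c hc).dvd_of_mem P hP a ha) hca)⟩
      · exact ⟨_, rfl, fun P hP =>
          (hgen c hc P hP).1 (mt ((h.isMark c hc).dvd_of_mem P hP b hb) hcb)⟩
  exact ⟨Y, hXY, hY, u, hu, hYS ▸ self_mem_fractionAdjoin _ _,
    hYS ▸ heq ▸ self_mem_fractionAdjoin _ _⟩

theorem IsFullyMarkedSubring.exists_reduced_factors (h : IsFullyMarkedSubring k R M) {a b : T}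
    (ha : a ∈ R) (hb : b ∈ R) (hb0 : b ≠ 0) : ∃ a' ∈ R, ∃ b' ∈ R, ∃ e ∈ R, e * a' = a ∧
      e * b' = b ∧ ∀ c ∈ M, ¬ c.1 ∣ a' ∨ ¬ c.1 ∣ b' := by
  have := h.uniqueFactorizationMonoid
  obtain ⟨a', b', e, hrel, hea, heb⟩ := UniqueFactorizationMonoid.exists_reduced_factors'
    (⟨a, ha⟩ : R) ⟨b, hb⟩ fun h0 => hb0 (congrArg Subtype.val h0)
  refine ⟨a', a'.2, b', b'.2, e, e.2, congrArg Subtype.val hea, congrArg Subtype.val heb,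
    fun c hc => ?_⟩
  by_contra! hdvd
  exact h.not_isUnit_of_fst_dvd hc (r := ⟨c.1, (h.isMark c hc).mem⟩) dvd_rfl
    (hrel (h.coe_dvd_coe.1 hdvd.1) (h.coe_dvd_coe.1 hdvd.2))

theorem IsStage.exists_ge_mul_add_eq (hX : IsStage k μ X) (hT : HasBoundedAssociatedPrimes T k n)
    (hμ : ℵ₀ ≤ μ) (hμT : μ < #(ResidueField T)) {y₀ t₀ s₀ : T} (hy₀ : y₀ ∈ X.1) (hy₀0 : y₀ ≠ 0)
    (hy : ∀ i ∈ s, y i ∈ X.1) (hy0 : ∃ i ∈ s, y i ≠ 0) (hs₀ : s₀ ∈ Ideal.span (y '' s))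
    (hc : t₀ * y₀ + s₀ ∈ X.1) :
    ∃ Y, X ≤ Y ∧ IsStage k μ Y ∧ ∃ g, ∃ z : ι → T, (∀ i ∈ s, z i ∈ Y.1 ∧ y i = g * z i) ∧
      ∃ x₁ ∈ Y.1, ∃ x₂ ∈ Y.1, x₂ ∈ Ideal.span (z '' s) ∧ x₁ * y₀ + g * x₂ = t₀ * y₀ + s₀ := by
  have h := hX.isFullyMarkedSubring
  obtain ⟨g, hg, hg0, z, hz, hzM⟩ := h.exists_content hy hy0
  obtain ⟨s₁, hs₁, rfl⟩ := (mem_span_image_iff_of_eq_mul fun i hi => (hz i hi).2).1 hs₀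
  obtain ⟨a, ha, b, hb, e, he, hea, heb, hab⟩ := h.exists_reduced_factors hy₀ hg hg0
  have ha0 : a ≠ 0 := right_ne_zero_of_mul (hea ▸ hy₀0)
  have hb0 : b ≠ 0 := right_ne_zero_of_mul (heb ▸ hg0)
  have hrel : a * t₀ + b * s₁ ∈ X.1 := by
    refine h.mem_of_mul_mem he (left_ne_zero_of_mul (hea ▸ hy₀0)) ?_
    convert hc using 1
    linear_combination t₀ * hea + s₁ * heb
  have hJ : ∀ c ∈ X.2, ∀ P ∈ criticalPrimes c, ¬ Ideal.span (z '' s) ≤ P := by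
    intro c hc P hP hle
    obtain ⟨i, hi, hci⟩ := hzM c hc
    exact hci ((h.isMark c hc).dvd_of_mem P hP _ (hz i hi).1
      (hle (Ideal.subset_span (Set.mem_image_of_mem z hi))))
  obtain ⟨Y, hXY, hY, u, hu, hx₁, hx₂⟩ :=
    hX.exists_ge_add_mul_mem hT hμ hμT ha ha0 hb hb0 hab hrel hJ
  refine ⟨Y, hXY, hY, g, z, fun i hi => ⟨hXY.1 (hz i hi).1, (hz i hi).2⟩, t₀ + b * u, hx₁,
    s₁ - a * u, hx₂, sub_mem hs₁ (Ideal.mul_mem_left _ a hu), ?_⟩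
  linear_combination u * (a * heb - b * hea)

theorem IsStage.exists_ge_mem_span (hX : IsStage k μ X) (hT : HasBoundedAssociatedPrimes T k n)
    (hμ : ℵ₀ ≤ μ) (hμT : μ < #(ResidueField T)) (hy : ∀ i ∈ s, y i ∈ X.1) {c : T} (hc : c ∈ X.1)
    (hcy : c ∈ Ideal.span (y '' s)) :
    ∃ Y, X ≤ Y ∧ IsStage k μ Y ∧ c ∈ Submodule.span Y.1 (y '' s) := by
  classical
  induction s using Finset.induction_on generalizing X y c with
  | empty => exact ⟨X, le_rfl, hX, by simpa using hcy⟩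
  | insert i₀ s _ ih =>
  have h := hX.isFullyMarkedSubring
  obtain ⟨hy₀, hys⟩ := Finset.forall_mem_insert .. |>.1 hy
  simp only [Finset.coe_insert, Set.image_insert_eq] at hcy ⊢
  obtain ⟨t₀, s₀, hs₀, rfl⟩ := Ideal.mem_span_insert.1 hcy
  by_cases hy₀0 : y i₀ = 0
  · rw [hy₀0, mul_zero, zero_add] at hc ⊢
    obtain ⟨Y, hXY, hY, hmem⟩ := ih hX hys hc hs₀
    exact ⟨Y, hXY, hY, Submodule.span_mono (Set.subset_insert _ _) hmem⟩
  by_cases hys0 : ∃ i ∈ s, y i ≠ 0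
  · obtain ⟨Y, hXY, hY, g, z, hz, x₁, hx₁, x₂, hx₂, hx₂z, hx⟩ :=
      hX.exists_ge_mul_add_eq hT hμ hμT hy₀ hy₀0 hys hys0 hs₀ hc
    obtain ⟨Z, hYZ, hZ, hmem⟩ := ih hY (fun i hi => (hz i hi).1) hx₂ hx₂z
    exact ⟨Z, hXY.trans hYZ, hZ, Submodule.mem_span_insert.2 ⟨⟨x₁, hYZ.1 hx₁⟩, g * x₂,
      (mem_span_image_iff_of_eq_mul fun i hi => (hz i hi).2).2 ⟨x₂, hmem, rfl⟩, hx.symm⟩⟩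
  · push Not at hys0
    have hspan : Ideal.span (y '' s) ≤ ⊥ := Ideal.span_le.2 (Set.image_subset_iff.2 hys0)
    obtain rfl : s₀ = 0 := hspan hs₀
    rw [add_zero] at hc ⊢
    have ht₀ : t₀ ∈ X.1 := h.mem_of_mul_mem hy₀ hy₀0 (mul_comm t₀ _ ▸ hc)
    exact ⟨X, le_rfl, hX, Submodule.smul_mem _ (⟨t₀, ht₀⟩ : X.1)
      (Submodule.subset_span (Set.mem_insert _ _))⟩

end LinearEquations

section TransfiniteConstruction

theorem exists_enumeration_unbounded_fibers {κ : Cardinal.{u}} (hκ : ℵ₀ ≤ κ) {ι : Type u}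
    [Nonempty ι] (hι : #ι ≤ κ) : ∃ e : κ.ord.ToType → ι, ∀ i j, ∃ l, j < l ∧ e l = i := by
  have hcard : #(ι × κ.ord.ToType) ≤ #κ.ord.ToType := by
    rw [mk_prod, lift_id, lift_id, mk_ord_toType]
    exact (mul_le_mul_left hι κ).trans (mul_eq_self hκ).le
  obtain ⟨φ⟩ := hcard
  have : Nonempty κ.ord.ToType := mk_ne_zero_iff.1 (by
    rw [mk_ord_toType]
    exact (aleph0_pos.trans_le hκ).ne')
  refine ⟨fun l => (Function.invFun φ l).1, fun i j => ?_⟩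
  by_contra! hj
  have hmaps (l : κ.ord.ToType) : φ (i, l) ∈ Set.Iic j := by
    refine not_lt.1 fun hlt => hj _ hlt ?_
    rw [Function.leftInverse_invFun φ.injective]
  have hle : #κ.ord.ToType ≤ #(Set.Iic j) := mk_le_of_injective
    (f := fun l => ⟨φ (i, l), hmaps l⟩) fun l l' h => by simpa using h
  exact hle.not_gt (mk_Iic_lt j (by simp) (by simpa using hκ))

theorem exists_forall_eq_image_Iio {W α : Type*} [Preorder W] [WellFoundedLT W]
    (F : W → Set α → α) : ∃ X : W → α, ∀ j, X j = F j (X '' Set.Iio j) := by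
  refine ⟨WellFoundedLT.fix fun j X => F j (Set.range fun l : Set.Iio j => X l l.2), fun j => ?_⟩
  rw [WellFoundedLT.fix_eq, Set.image_eq_range]

theorem directedOn_insert_image_Iio {W α : Type*} [LinearOrder W] [Preorder α] {X : W → α} {j : W}
    (hX : MonotoneOn X (Set.Iio j)) {x₀ : α} (hx₀ : ∀ l < j, x₀ ≤ X l) :
    DirectedOn (· ≤ ·) (insert x₀ (X '' Set.Iio j)) := by
  refine DirectedOn.insert x₀ (directedOn_image.2 fun l hl l' hl' => ?_) ?_
  · rcases le_total l l' with hll' | hll'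
    · exact ⟨l', hl', hX hl hl' hll', le_rfl⟩
    · exact ⟨l, hl, le_rfl, hX hl' hl hll'⟩
  · rintro _ ⟨l, hl, rfl⟩
    exact ⟨X l, ⟨l, hl, rfl⟩, hx₀ l hl, le_rfl⟩

/-- Here `Z j` is the supremum of everything built before step `j`. -/
theorem exists_forall_le_and_task {W α : Type*} [LinearOrder W] [WellFoundedLT W]
    [CompleteLattice α] {P : W → α → Prop} {task : W → α → α → Prop} {x₀ : α}
    (hsup : ∀ (j : W) (X : W → α), (∀ l < j, P l (X l)) →
      DirectedOn (· ≤ ·) (insert x₀ (X '' Set.Iio j)) → P j (sSup (insert x₀ (X '' Set.Iio j))))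
    (hstep : ∀ j x, P j x → ∃ y, x ≤ y ∧ P j y ∧ task j x y) :
    ∃ X Z : W → α, (∀ l j, l < j → X l ≤ Z j) ∧
      ∀ j, Z j ≤ X j ∧ P j (X j) ∧ task j (Z j) (X j) := by
  choose! next hle hnext htask using hstep
  obtain ⟨X, hX⟩ := exists_forall_eq_image_Iio fun j s => next j (sSup (insert x₀ s))
  let Z (j : W) : α := sSup (insert x₀ (X '' Set.Iio j))
  have hXZ (l j : W) (hlj : l < j) : X l ≤ Z j := le_sSup (Or.inr ⟨l, hlj, rfl⟩)
  have hZX {j} (hj : P j (Z j)) : Z j ≤ X j ∧ P j (X j) ∧ task j (Z j) (X j) := by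
    rw [hX j]
    exact ⟨hle _ _ hj, hnext _ _ hj, htask _ _ hj⟩
  refine ⟨X, Z, hXZ, fun j => hZX ?_⟩
  induction j using WellFoundedLT.induction with
  | ind j ih =>
    have hXmono : MonotoneOn X (Set.Iio j) := monotoneOn_iff_forall_lt.2 fun l _ l' hl' hll' =>
      (hXZ l l' hll').trans (hZX (ih l' hl')).1
    exact hsup j X (fun l hl => (hZX (ih l hl)).2.1) (directedOn_insert_image_Iio hXmono fun l hl =>
      (le_sSup (Set.mem_insert _ _)).trans (hZX (ih l hl)).1)

/-- Here `P μ x` says that `x` is an admissible approximation of size at most `μ`, and `task i x y`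
says that `y` carries out the `i`-th task for `x`. -/
theorem exists_directedOn_forall_task {α : Type u} [CompleteLattice α] {κ : Cardinal.{u}}
    (hκ : ℵ₀ < κ) {ι : Type u} [Nonempty ι] (hι : #ι ≤ κ) {P : Cardinal.{u} → α → Prop}
    {task : ι → α → α → Prop} (hmono : ∀ x, Monotone (P · x)) (hbase : ∃ x, P ℵ₀ x)
    (hsup : ∀ μ, ℵ₀ ≤ μ → ∀ s : Set α, s.Nonempty → DirectedOn (· ≤ ·) s → #s ≤ μ →
      (∀ x ∈ s, P μ x) → P μ (sSup s))
    (hstep : ∀ i μ, ℵ₀ ≤ μ → μ < κ → ∀ x, P μ x → ∃ y, x ≤ y ∧ P μ y ∧ task i x y) :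
    ∃ s : Set α, s.Nonempty ∧ DirectedOn (· ≤ ·) s ∧ (∀ x ∈ s, P κ x) ∧
      ∀ i, ∀ x ∈ s, ∃ y, x ≤ y ∧ ∃ z ∈ s, y ≤ z ∧ task i y z := by
  obtain ⟨e, he⟩ := exists_enumeration_unbounded_fibers hκ.le hι
  obtain ⟨x₀, hx₀⟩ := hbase
  let μ (j : κ.ord.ToType) : Cardinal.{u} := max ℵ₀ #(Set.Iio j)
  have hμ₀ (j) : ℵ₀ ≤ μ j := le_max_left _ _
  have hμ (j) : μ j < κ := max_lt hκ (by simpa using mk_Iio_lt j (by simp))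
  have hμmono : Monotone μ := fun l j hlj =>
    max_le_max_left _ (mk_le_mk_of_subset (Set.Iio_subset_Iio hlj))
  have hsup' (j : κ.ord.ToType) (X : κ.ord.ToType → α) (hX : ∀ l < j, P (μ l) (X l))
      (hdir : DirectedOn (· ≤ ·) (insert x₀ (X '' Set.Iio j))) :
      P (μ j) (sSup (insert x₀ (X '' Set.Iio j))) := by
    refine hsup _ (hμ₀ j) _ (Set.insert_nonempty _ _) hdir ?_ ?_
    · exact mk_insert_le.trans (add_le_of_le (hμ₀ j) (mk_image_le.trans (le_max_right _ _))
        (one_le_aleph0.trans (hμ₀ j)))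
    · rintro _ (rfl | ⟨l, hl, rfl⟩)
      · exact hmono _ (hμ₀ j) hx₀
      · exact hmono _ (hμmono (le_of_lt hl)) (hX l hl)
  obtain ⟨X, Z, hXZ, hX⟩ := exists_forall_le_and_task (P := fun j => P (μ j))
    (task := fun j => task (e j)) hsup' fun j => hstep (e j) (μ j) (hμ₀ j) (hμ j)
  have hXmono : Monotone X := monotone_iff_forall_lt.2 fun l j hlj => (hXZ l j hlj).trans (hX j).1
  have : Nonempty κ.ord.ToType := mk_ne_zero_iff.1 (by
    rw [mk_ord_toType]
    exact (aleph0_pos.trans hκ).ne')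
  refine ⟨Set.range X, Set.range_nonempty X, directedOn_range.2 hXmono.directed_le, ?_, ?_⟩
  · rintro _ ⟨j, rfl⟩
    exact hmono _ (hμ j).le (hX j).2.1
  · rintro i _ ⟨j, rfl⟩
    obtain ⟨l, hjl, rfl⟩ := he i j
    exact ⟨Z l, hXZ j l hjl, X l, ⟨l, rfl⟩, (hX l).1, (hX l).2.2⟩

end TransfiniteConstruction

section DirectedUnion

variable {T : Type u} [CommRing T] {S : Set (Subring T × Set (T × Ideal T))}

theorem mem_fst_sSup_iff (hne : S.Nonempty) (hS : DirectedOn (· ≤ ·) S) {x : T} :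
    x ∈ (sSup S).1 ↔ ∃ X ∈ S, x ∈ X.1 := by
  rw [Prod.fst_sSup, Subring.mem_sSup_of_directedOn (hne.image _)
    (hS.mono_comp fun _ _ h => h.1), Set.exists_mem_image]

theorem mem_snd_sSup_iff {c : T × Ideal T} : c ∈ (sSup S).2 ↔ ∃ X ∈ S, c ∈ X.2 := by
  simp only [Prod.snd_sSup, Set.sSup_eq_sUnion, Set.sUnion_image, Set.mem_iUnion, exists_prop]

variable [IsLocalRing T] {k : ℕ}

theorem isFullyMarkedSubring_sSup (hne : S.Nonempty) (hS : DirectedOn (· ≤ ·) S)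
    (h : ∀ X ∈ S, IsFullyMarkedSubring k X.1 X.2) :
    IsFullyMarkedSubring k (sSup S).1 (sSup S).2 where
  fractionClosure_le := by
    rintro s ⟨a, ha, ha0, has⟩
    obtain ⟨X, hX, haX⟩ := (mem_fst_sSup_iff hne hS).1 ha
    obtain ⟨Y, hY, hasY⟩ := (mem_fst_sSup_iff hne hS).1 has
    obtain ⟨Z, hZ, hXZ, hYZ⟩ := hS X hX Y hY
    exact (mem_fst_sSup_iff hne hS).2
      ⟨Z, hZ, (h Z hZ).fractionClosure_le ⟨a, hXZ.1 haX, ha0, hYZ.1 hasY⟩⟩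
  isMark := by
    intro c hc
    obtain ⟨X, hX, hcX⟩ := mem_snd_sSup_iff.1 hc
    refine ⟨(mem_fst_sSup_iff hne hS).2 ⟨X, hX, ((h X hX).isMark c hcX).mem⟩, fun P hP r hr => ?_⟩
    obtain ⟨Y, hY, hrY⟩ := (mem_fst_sSup_iff hne hS).1 hr
    obtain ⟨Z, hZ, hXZ, hYZ⟩ := hS X hX Y hY
    exact ((h Z hZ).isMark c (hXZ.2 hcX)).dvd_of_mem P hP r (hYZ.1 hrY)
  isChainTop := by
    intro c hc
    obtain ⟨X, hX, hcX⟩ := mem_snd_sSup_iff.1 hc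
    exact (h X hX).isChainTop c hcX
  exists_fst_eq_zero := by
    obtain ⟨X, hX⟩ := hne
    obtain ⟨c, hc, hc0⟩ := (h X hX).exists_fst_eq_zero
    exact ⟨c, mem_snd_sSup_iff.2 ⟨X, hX, hc⟩, hc0⟩
  exists_fst_dvd := by
    intro r hr hr0 hrm
    obtain ⟨X, hX, hrX⟩ := (mem_fst_sSup_iff hne hS).1 hr
    obtain ⟨c, hc, hcr⟩ := (h X hX).exists_fst_dvd r hrX hr0 hrm
    exact ⟨c, mem_snd_sSup_iff.2 ⟨X, hX, hc⟩, hcr⟩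

theorem isStage_sSup {μ : Cardinal.{u}} (hμ : ℵ₀ ≤ μ) (hne : S.Nonempty)
    (hS : DirectedOn (· ≤ ·) S) (hSμ : #S ≤ μ) (h : ∀ X ∈ S, IsStage k μ X) :
    IsStage k μ (sSup S) := by
  have hmk {α : Type u} (A : S → Set α) (hA : ∀ X, #(A X) ≤ μ) : #(⋃ X, A X) ≤ μ :=
    (mk_iUnion_le A).trans ((mul_le_mul' hSμ (ciSup_le' hA)).trans (mul_eq_self hμ).le)
  refine ⟨isFullyMarkedSubring_sSup hne hS fun X hX => (h X hX).isFullyMarkedSubring, ?_, ?_⟩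
  · refine (mk_le_mk_of_subset (t := ⋃ X : S, (X.1.1 : Set T)) fun x hx => ?_).trans
      (hmk _ fun X => (h X X.2).mk_fst_le)
    obtain ⟨X, hX, hxX⟩ := (mem_fst_sSup_iff hne hS).1 hx
    exact Set.mem_iUnion.2 ⟨⟨X, hX⟩, hxX⟩
  · refine (mk_le_mk_of_subset (t := ⋃ X : S, X.1.2) fun c hc => ?_).trans
      (hmk _ fun X => (h X X.2).mk_snd_le)
    obtain ⟨X, hX, hcX⟩ := mem_snd_sSup_iff.1 hc
    exact Set.mem_iUnion.2 ⟨⟨X, hX⟩, hcX⟩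

end DirectedUnion

section Exhaustion

/-- The properties of a subring `R` of `T` which the construction enforces one task at a time. -/
structure IsExhaustive {T : Type*} [CommRing T] [IsLocalRing T] (k : ℕ) (R : Subring T) :
    Prop where
  exists_sub_mem : ∀ t, ∃ x ∈ R, x - t ∈ maximalIdeal T ^ 2
  exists_mem : ∀ P : Ideal T, P.IsPrime → (k + 1 : ℕ) ≤ P.height → ∃ x ∈ R, x ≠ 0 ∧ x ∈ P
  exists_isRegularMod : ∀ P : Ideal T, (k + 2 : ℕ) ≤ P.height →
    ∃ x ∈ R, ∃ y ∈ R, x ≠ 0 ∧ x ∈ P ∧ y ∈ P ∧ IsRegularMod x y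
  mem_span : ∀ s : Finset T, (s : Set T) ⊆ R → ∀ c ∈ R, c ∈ Ideal.span (s : Set T) →
    c ∈ Submodule.span R (s : Set T)

/-- The tasks corresponding to the four fields of `IsExhaustive`; an index in the last summand is
a finite set of coefficients together with the right-hand side of a linear equation. -/
abbrev ExhaustionTask (T : Type*) [CommRing T] := T ⊕ Ideal T ⊕ Ideal T ⊕ Finset T × T

/-- The extension `S` of `R` carries out the given task for `R`. -/
def ExhaustionTask.IsDone {T : Type*} [CommRing T] [IsLocalRing T] (k : ℕ) :
    ExhaustionTask T → Subring T → Subring T → Prop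
  | .inl t, _, S => ∃ x ∈ S, x - t ∈ maximalIdeal T ^ 2
  | .inr (.inl P), _, S => P.IsPrime → (k + 1 : ℕ) ≤ P.height → ∃ x ∈ S, x ≠ 0 ∧ x ∈ P
  | .inr (.inr (.inl P)), _, S => (k + 2 : ℕ) ≤ P.height →
    ∃ x ∈ S, ∃ y ∈ S, x ≠ 0 ∧ x ∈ P ∧ y ∈ P ∧ IsRegularMod x y
  | .inr (.inr (.inr (s, c))), R, S => (s : Set T) ⊆ R → c ∈ R → c ∈ Ideal.span (s : Set T) →
    c ∈ Submodule.span S (s : Set T)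

variable {T : Type u} [CommRing T]

theorem mk_ideal_le [IsNoetherianRing T] [Infinite T] : #(Ideal T) ≤ #T := by
  rw [← mk_finset_of_infinite T]
  exact mk_le_of_surjective (f := fun s : Finset T => Ideal.span (s : Set T)) fun I =>
    IsNoetherian.noetherian I

theorem mk_exhaustionTask_le [IsNoetherianRing T] [Infinite T] : #(ExhaustionTask T) ≤ #T := by
  have hT : ℵ₀ ≤ #T := aleph0_le_mk T
  have hprod : #(Finset T × T) ≤ #T := by
    rw [mk_prod, lift_id, lift_id, mk_finset_of_infinite]
    exact (mul_eq_self hT).le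
  have hsum {α β : Type u} (hα : #α ≤ #T) (hβ : #β ≤ #T) : #(α ⊕ β) ≤ #T := by
    rw [mk_sum, lift_id, lift_id]
    exact add_le_of_le hT hα hβ
  exact hsum le_rfl (hsum mk_ideal_le (hsum mk_ideal_le hprod))

theorem mem_span_of_subring_le {R S : Subring T} (h : R ≤ S) {s : Set T} {c : T}
    (hc : c ∈ Submodule.span R s) : c ∈ Submodule.span S s := by
  induction hc using Submodule.span_induction with
  | mem x hx => exact Submodule.subset_span hx
  | zero => exact zero_mem _
  | add x y _ _ hx hy => exact add_mem hx hy
  | smul r x _ hx => exact Submodule.smul_mem _ (⟨r, h r.2⟩ : S) hx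

variable [IsLocalRing T] {k n : ℕ}

theorem IsStage.exists_ge_task [IsNoetherianRing T] {μ : Cardinal.{u}}
    {X : Subring T × Set (T × Ideal T)} (hX : IsStage k μ X)
    (hT : HasBoundedAssociatedPrimes T k n) (hμ : ℵ₀ ≤ μ) (hμT : μ < #(ResidueField T))
    (i : ExhaustionTask T) : ∃ Y, X ≤ Y ∧ IsStage k μ Y ∧ i.IsDone k X.1 Y.1 := by
  obtain t | P | P | ⟨s, c⟩ := i
  · exact hX.exists_ge_sub_mem_maximalIdeal_sq hT hμ hμT t
  · by_cases hP : P.IsPrime ∧ (k + 1 : ℕ) ≤ P.height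
    · obtain ⟨Y, hXY, hY, hYP⟩ := hX.exists_ge_mem_of_le_height hT hμ hμT hP.1 hP.2
      exact ⟨Y, hXY, hY, fun _ _ => hYP⟩
    · exact ⟨X, le_rfl, hX, fun hP₁ hP₂ => (hP ⟨hP₁, hP₂⟩).elim⟩
  · by_cases hP : (k + 2 : ℕ) ≤ P.height
    · obtain ⟨Y, hXY, hY, hYP⟩ := hX.exists_ge_isRegularMod hT hμ hμT hP
      exact ⟨Y, hXY, hY, fun _ => hYP⟩
    · exact ⟨X, le_rfl, hX, fun hP' => (hP hP').elim⟩
  · by_cases h : (s : Set T) ⊆ X.1 ∧ c ∈ X.1 ∧ c ∈ Ideal.span (s : Set T)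
    · obtain ⟨Y, hXY, hY, hYc⟩ := hX.exists_ge_mem_span hT hμ hμT (y := id) h.1 h.2.1
        (by simpa only [Set.image_id] using h.2.2)
      exact ⟨Y, hXY, hY, fun _ _ _ => by simpa only [Set.image_id] using hYc⟩
    · exact ⟨X, le_rfl, hX, fun hs hc hcs => (h ⟨hs, hc, hcs⟩).elim⟩

theorem isExhaustive_sSup {S : Set (Subring T × Set (T × Ideal T))} (hne : S.Nonempty)
    (hS : DirectedOn (· ≤ ·) S)
    (h : ∀ i : ExhaustionTask T, ∀ X ∈ S, ∃ Y, X ≤ Y ∧ ∃ Z ∈ S, Y ≤ Z ∧ i.IsDone k Y.1 Z.1) :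
    IsExhaustive k (sSup S).1 := by
  have hmem {Z} (hZ : Z ∈ S) {x : T} (hx : x ∈ Z.1) : x ∈ (sSup S).1 := (le_sSup hZ).1 hx
  obtain ⟨X₀, hX₀⟩ := hne
  refine ⟨fun t => ?_, fun P hP hPh => ?_, fun P hPh => ?_, fun s hs c hc hcs => ?_⟩
  · obtain ⟨_, _, Z, hZ, _, x, hx, hxt⟩ := h (.inl t) X₀ hX₀
    exact ⟨x, hmem hZ hx, hxt⟩
  · obtain ⟨_, _, Z, hZ, _, hdone⟩ := h (.inr (.inl P)) X₀ hX₀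
    obtain ⟨x, hx, hxP⟩ := hdone hP hPh
    exact ⟨x, hmem hZ hx, hxP⟩
  · obtain ⟨_, _, Z, hZ, _, hdone⟩ := h (.inr (.inr (.inl P))) X₀ hX₀
    obtain ⟨x, hx, y, hy, hxy⟩ := hdone hPh
    exact ⟨x, hmem hZ hx, y, hmem hZ hy, hxy⟩
  · classical
    have hsub : ((insert c s : Finset T) : Set T) ⊆ ⋃ X ∈ S, (X.1 : Set T) := fun x hx => by
      have hxS : x ∈ (sSup S).1 := by
        rcases Finset.mem_insert.1 hx with rfl | hx
        exacts [hc, hs hx]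
      exact Set.mem_iUnion₂.2 (by simpa using (mem_fst_sSup_iff ⟨X₀, hX₀⟩ hS).1 hxS)
    obtain ⟨X, hX, hsX⟩ := DirectedOn.exists_mem_subset_of_finset_subset_biUnion ⟨X₀, hX₀⟩
      (hS.mono fun _ _ h => h.1) hsub
    rw [Finset.coe_insert, Set.insert_subset_iff] at hsX
    obtain ⟨Y, hXY, Z, hZ, -, hdone⟩ := h (.inr (.inr (.inr (s, c)))) X hX
    exact mem_span_of_subring_le (le_sSup hZ).1
      (hdone (hsX.2.trans hXY.1) (hXY.1 hsX.1) hcs)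

theorem HasBoundedAssociatedPrimes.exists_isExhaustive [IsNoetherianRing T]
    (hT : HasBoundedAssociatedPrimes T k n)
    (hint : ∀ z : ℤ, z ≠ 0 → (z : T) ∈ nonZeroDivisors T) (hκ : ℵ₀ < #(ResidueField T))
    (hcard : #T = #(ResidueField T)) :
    ∃ (R : Subring T) (M : Set (T × Ideal T)), IsFullyMarkedSubring k R M ∧ IsExhaustive k R := by
  obtain ⟨R₀, M₀, hR₀, hM₀, h₀⟩ := exists_isFullyMarkedSubring hT.ringKrullDim_eq hT.add_two_le
    hκ hint
  have : Infinite T := infinite_iff.2 (hcard ▸ hκ.le)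
  obtain ⟨S, hne, hS, hstage, htask⟩ := exists_directedOn_forall_task hκ
    (mk_exhaustionTask_le.trans hcard.le) (P := IsStage k)
    (task := fun i X Y => i.IsDone k X.1 Y.1)
    (fun X μ ν hμν hX => ⟨hX.1, hX.2.trans hμν, hX.3.trans hμν⟩) ⟨(R₀, M₀), h₀, hR₀, hM₀⟩
    (fun μ hμ S hne hS hSμ h => isStage_sSup hμ hne hS hSμ h)
    fun i μ hμ hμT X hX => hX.exists_ge_task hT hμ hμT i
  exact ⟨_, _, isFullyMarkedSubring_sSup hne hS fun X hX => (hstage X hX).isFullyMarkedSubring,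
    isExhaustive_sSup hne hS htask⟩

end Exhaustion

section Completion

variable {A B : Type*} [CommRing A] [CommRing B] [Algebra A B]

theorem isNoetherianRing_of_comap_map [IsNoetherianRing B]
    (h : ∀ I : Ideal A, (I.map (algebraMap A B)).comap (algebraMap A B) = I) :
    IsNoetherianRing A := by
  have hmono : StrictMono fun I : Ideal A => I.map (algebraMap A B) :=
    Monotone.strictMono_of_injective (fun _ _ => Ideal.map_mono) (Function.LeftInverse.injective h)
  exact isNoetherian_iff'.2 hmono.wellFoundedGT

theorem map_maximalIdeal_eq_of_forall_exists_sub_mem [IsLocalRing A] [IsLocalRing B]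
    [IsNoetherianRing B] [IsLocalHom (algebraMap A B)]
    (h : ∀ b : B, ∃ a : A, algebraMap A B a - b ∈ maximalIdeal B ^ 2) :
    (maximalIdeal A).map (algebraMap A B) = maximalIdeal B := by
  refine le_antisymm (((local_hom_TFAE _).out 0 2).1 ‹_›)
    (Submodule.le_of_le_smul_of_le_jacobson_bot (I := maximalIdeal B)
      (IsNoetherian.noetherian _) (maximalIdeal_le_jacobson _) fun b hb => ?_)
  obtain ⟨a, ha⟩ := h b
  have ham : algebraMap A B a ∈ maximalIdeal B :=
    (Submodule.sub_mem_iff_left _ hb).1 (Ideal.pow_le_self two_ne_zero ha)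
  rw [smul_eq_mul, ← sq, ← sub_sub_cancel (algebraMap A B a) b]
  refine sub_mem (Ideal.mem_sup_left (Ideal.mem_map_of_mem _ ?_)) (Ideal.mem_sup_right ha)
  exact ((local_hom_TFAE _).out 0 4).1 ‹_› ▸ Ideal.mem_comap.2 ham

theorem pow_le_comap_map_pow (I : Ideal A) (n : ℕ) :
    I ^ n ≤ (I.map (algebraMap A B) ^ n).comap (Algebra.ofId A B) := by
  rw [← Ideal.map_pow]
  exact Ideal.le_comap_map

theorem factorₐ_comp_quotientMapₐ_comp_evalₐ (I : Ideal A) {m n : ℕ} (hmn : m ≤ n) :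
    (Ideal.Quotient.factorₐ A (Ideal.pow_le_pow_right hmn)).comp
      ((Ideal.quotientMapₐ _ (Algebra.ofId A B) (pow_le_comap_map_pow I n)).comp
        (AdicCompletion.evalₐ I n)) =
      (Ideal.quotientMapₐ _ (Algebra.ofId A B) (pow_le_comap_map_pow I m)).comp
        (AdicCompletion.evalₐ I m) := by
  ext x
  obtain ⟨x, rfl⟩ := AdicCompletion.mk_surjective _ _ x
  simp only [AlgHom.comp_apply, AdicCompletion.evalₐ_mk, ← AdicCompletion.Ideal.mk_eq_mk _ hmn]
  rfl

variable (B) in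
/-- The map from the `I`-adic completion of `A` to an `A`-algebra complete for the extension
of `I`. -/
noncomputable def adicCompletionLift (I : Ideal A) [IsAdicComplete (I.map (algebraMap A B)) B] :
    AdicCompletion I A →ₐ[A] B :=
  IsAdicComplete.liftAlgHom (I.map (algebraMap A B))
    (fun n => (Ideal.quotientMapₐ _ (Algebra.ofId A B) (pow_le_comap_map_pow I n)).comp
      (AdicCompletion.evalₐ I n)) (factorₐ_comp_quotientMapₐ_comp_evalₐ I)

theorem mk_adicCompletionLift (I : Ideal A) [IsAdicComplete (I.map (algebraMap A B)) B] (n : ℕ)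
    (x : AdicCompletion I A) :
    Ideal.Quotient.mk (I.map (algebraMap A B) ^ n) (adicCompletionLift B I x) =
      Ideal.quotientMapₐ _ (Algebra.ofId A B) (pow_le_comap_map_pow I n)
        (AdicCompletion.evalₐ I n x) :=
  IsAdicComplete.mk_liftAlgHom _ _ (factorₐ_comp_quotientMapₐ_comp_evalₐ I) n x

theorem injective_adicCompletionLift {I : Ideal A} [IsAdicComplete (I.map (algebraMap A B)) B]
    (h : ∀ n, ((I ^ n).map (algebraMap A B)).comap (algebraMap A B) ≤ I ^ n) :
    Function.Injective (adicCompletionLift B I) := by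
  refine (injective_iff_map_eq_zero _).2 fun x hx => AdicCompletion.ext_evalₐ fun n => ?_
  have hinj : Function.Injective
      (Ideal.quotientMapₐ _ (Algebra.ofId A B) (pow_le_comap_map_pow I n)) :=
    Ideal.quotientMap_injective' (H := pow_le_comap_map_pow I n)
      (by simpa only [← Ideal.map_pow] using! h n)
  refine hinj (.trans (mk_adicCompletionLift I n x).symm ?_)
  rw [hx, map_zero, map_zero, map_zero]

theorem surjective_adicCompletionLift {I : Ideal A} (hI : I.FG)
    [IsAdicComplete (I.map (algebraMap A B)) B]
    (h : ∀ b : B, ∃ a : A, algebraMap A B a - b ∈ I.map (algebraMap A B)) :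
    Function.Surjective (adicCompletionLift B I) := by
  have : IsAdicComplete I (AdicCompletion I A) := AdicCompletion.isAdicComplete hI
  have : IsHausdorff I B := (IsHausdorff.map_algebraMap_iff (S := B)).1 inferInstance
  refine surjective_of_mkQ_comp_surjective (I := I) (f := (adicCompletionLift B I).toLinearMap)
    fun b => ?_
  obtain ⟨b, rfl⟩ := Submodule.mkQ_surjective _ b
  obtain ⟨a, ha⟩ := h b
  refine ⟨algebraMap A _ a, (Submodule.Quotient.eq _).2 ?_⟩
  simpa using ha

theorem nonempty_adicCompletion_algEquiv {I : Ideal A} (hI : I.FG)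
    [IsAdicComplete (I.map (algebraMap A B)) B]
    (hcomap : ∀ n, ((I ^ n).map (algebraMap A B)).comap (algebraMap A B) ≤ I ^ n)
    (hsurj : ∀ b : B, ∃ a : A, algebraMap A B a - b ∈ I.map (algebraMap A B)) :
    Nonempty (AdicCompletion I A ≃ₐ[A] B) :=
  ⟨.ofBijective (adicCompletionLift B I)
    ⟨injective_adicCompletionLift hcomap, surjective_adicCompletionLift hI hsurj⟩⟩

end Completion

section CompletionOfExhaustive

variable {T : Type*} [CommRing T] [IsLocalRing T] {k : ℕ} {R : Subring T}

theorem IsExhaustive.comap_map (h : IsExhaustive k R) (I : Ideal R) :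
    (I.map R.subtype).comap R.subtype = I := by
  refine le_antisymm (fun c hc => ?_) Ideal.le_comap_map
  obtain ⟨s, hs, hcs⟩ := Submodule.mem_span_finite_of_mem_span (Ideal.mem_comap.1 hc)
  have hspan : Submodule.span R (s : Set T) ≤ Submodule.map (Algebra.linearMap R T) I :=
    Submodule.span_le.2 hs
  obtain ⟨i, hi, hic⟩ := hspan
    (h.mem_span s (fun y hy => (hs hy).elim fun i hi => hi.2 ▸ i.2) c c.2 hcs)
  rwa [← Subtype.ext hic]

variable [IsNoetherianRing T]

theorem IsExhaustive.isNoetherianRing (h : IsExhaustive k R) : IsNoetherianRing R :=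
  isNoetherianRing_of_comap_map h.comap_map

theorem IsExhaustive.nonempty_adicCompletion_algEquiv [IsAdicComplete (maximalIdeal T) T]
    [IsLocalRing R] [IsLocalHom R.subtype] (h : IsExhaustive k R) :
    Nonempty (AdicCompletion (maximalIdeal R) R ≃ₐ[R] T) := by
  have : IsNoetherianRing R := h.isNoetherianRing
  have hsurj (t : T) : ∃ a : R, algebraMap R T a - t ∈ maximalIdeal T ^ 2 := by
    obtain ⟨x, hx, hxt⟩ := h.exists_sub_mem t
    exact ⟨⟨x, hx⟩, hxt⟩
  have : IsLocalHom (algebraMap R T) := ‹IsLocalHom R.subtype›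
  have hmap : (maximalIdeal R).map (algebraMap R T) = maximalIdeal T :=
    map_maximalIdeal_eq_of_forall_exists_sub_mem hsurj
  have : IsAdicComplete ((maximalIdeal R).map (algebraMap R T)) T := hmap ▸ ‹_›
  refine _root_.nonempty_adicCompletion_algEquiv (IsNoetherian.noetherian _)
    (fun n => (h.comap_map _).le) fun t => (hsurj t).imp fun a ha => ?_
  exact hmap ▸ Ideal.pow_le_self two_ne_zero ha

end CompletionOfExhaustive

section FormalFibers

theorem alphaAt_eq_krullDim {T : Type u} [CommRing T] (X : LocalUFDWithCompletion T)
    (p : Ideal X.A) (hp : p.IsPrime) :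
    alphaAt X p hp = Order.krullDim
      {P : PrimeSpectrum T // PrimeSpectrum.comap X.toCompletion P = ⟨p, hp⟩} := by
  let := X.toCompletion.toAlgebra
  exact (ringKrullDim_eq_of_ringEquiv
    (Algebra.TensorProduct.comm X.A T p.ResidueField).toRingEquiv).trans
    (Order.krullDim_eq_of_orderIso (PrimeSpectrum.preimageOrderIsoFiber X.A T ⟨p, hp⟩)).symm

theorem alphaAt_eq {T : Type u} [CommRing T] (X : LocalUFDWithCompletion T) {p : Ideal X.A}
    (hp : p.IsPrime) {k : ℕ}
    (hex : ∃ l : LTSeries (PrimeSpectrum T),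
      l.length = k ∧ ∀ i, (l i).asIdeal.comap X.toCompletion = p)
    (hle : ∀ l : LTSeries (PrimeSpectrum T),
      (∀ i, (l i).asIdeal.comap X.toCompletion = p) → l.length ≤ k) :
    alphaAt X p hp = k := by
  rw [alphaAt_eq_krullDim]
  refine le_antisymm (iSup_le fun l => ?_) (Order.le_krullDim_iff.2 ?_)
  · exact_mod_cast hle (l.map Subtype.val fun _ _ h => h) fun i =>
      congrArg PrimeSpectrum.asIdeal (l i).2
  · obtain ⟨l, hl, hlp⟩ := hex
    exact ⟨⟨l.length, fun i => ⟨l i, PrimeSpectrum.ext (hlp i)⟩, l.step⟩, hl⟩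

variable {T : Type*} [CommRing T]

theorem length_add_one_le_height_last_of_mem_nonZeroDivisors {l : LTSeries (PrimeSpectrum T)}
    {x : T} (hx : x ∈ nonZeroDivisors T) (hxl : x ∈ l.head.asIdeal) :
    (l.length + 1 : ℕ) ≤ l.last.asIdeal.height := by
  obtain ⟨q, hq, hql⟩ := Ideal.exists_minimalPrimes_le (bot_le (a := l.head.asIdeal))
  have hlt : (⟨q, hq.1.1⟩ : PrimeSpectrum T) < l.head := lt_of_le_of_ne hql fun h =>
    notMem_nonZeroDivisors_of_mem_mem_minimalPrimes (h ▸ hxl : x ∈ PrimeSpectrum.asIdeal ⟨q, _⟩)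
      hq hx
  have := Order.length_le_height_last (p := l.cons ⟨q, hq.1.1⟩ hlt)
  rwa [RelSeries.last_cons, RelSeries.cons_length, ← PrimeSpectrum.height_eq_orderHeight] at this

variable [IsLocalRing T]

theorem IsRegularMod.isUnit_of_dvd_of_dvd {a b c : T} (hab : IsRegularMod a b) (ha : a ≠ 0)
    (hca : c ∣ a) (hcb : c ∣ b) : IsUnit c := by
  obtain ⟨a, rfl⟩ := hca
  obtain ⟨b, rfl⟩ := hcb
  obtain ⟨t, ht⟩ := hab a ⟨b, by ring⟩
  by_contra hc
  have hu : IsUnit (1 - c * t) := isUnit_one_sub_self_of_mem_nonunits _ fun h =>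
    hc (isUnit_of_mul_isUnit_left h)
  have h0 : (1 - c * t) * a = 0 := by linear_combination ht
  exact ha (by rw [hu.mul_right_eq_zero.1 h0, mul_zero])

variable {k : ℕ} {R : Subring T}

theorem IsExhaustive.length_le_of_comap_eq_bot (h : IsExhaustive k R)
    (l : LTSeries (PrimeSpectrum T)) (hl : ∀ i, (l i).asIdeal.comap R.subtype = ⊥) :
    l.length ≤ k := by
  by_contra! hlt
  have hheight := Order.length_le_height_last (p := l)
  rw [← PrimeSpectrum.height_eq_orderHeight] at hheight
  obtain ⟨x, hx, hx0, hxl⟩ := h.exists_mem l.last.asIdeal l.last.2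
    ((Nat.cast_le.2 hlt).trans hheight)
  have : (⟨x, hx⟩ : R) ∈ (⊥ : Ideal R) := hl (Fin.last _) ▸ Ideal.mem_comap.2 hxl
  exact hx0 (congrArg Subtype.val (Ideal.mem_bot.1 this))

theorem IsExhaustive.length_le_of_comap_eq_span (h : IsExhaustive k R) {p : R}
    (hp : (p : T) ∈ nonZeroDivisors T) (hpm : (p : T) ∈ maximalIdeal T)
    (l : LTSeries (PrimeSpectrum T)) (hl : ∀ i, (l i).asIdeal.comap R.subtype = Ideal.span {p}) :
    l.length ≤ k := by
  by_contra! hlt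
  have hhead : (p : T) ∈ l.head.asIdeal :=
    Ideal.mem_comap.1 (hl 0 ▸ Ideal.mem_span_singleton_self p)
  obtain ⟨x, hx, y, hy, hx0, hxl, hyl, hxy⟩ := h.exists_isRegularMod l.last.asIdeal
    ((Nat.cast_le.2 (by omega : k + 2 ≤ l.length + 1)).trans
      (length_add_one_le_height_last_of_mem_nonZeroDivisors hp hhead))
  have hdvd {z : T} (hz : z ∈ R) (hzl : z ∈ l.last.asIdeal) : (p : T) ∣ z :=
    map_dvd R.subtype (Ideal.mem_span_singleton.1
      (hl (Fin.last _) ▸ Ideal.mem_comap.2 hzl : (⟨z, hz⟩ : R) ∈ Ideal.span {p}))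
  exact (mem_maximalIdeal _).1 hpm (hxy.isUnit_of_dvd_of_dvd hx0 (hdvd hx hxl) (hdvd hy hyl))

variable [IsNoetherianRing T] {M : Set (T × Ideal T)}

theorem IsMarkedSubring.comap_eq_span (h : IsMarkedSubring k R M) {c : T × Ideal T} (hc : c ∈ M)
    {P : Ideal T} (hcP : c.1 ∈ P) (hP : P ≤ c.2) :
    P.comap R.subtype = Ideal.span {⟨c.1, (h.isMark c hc).mem⟩} := by
  ext r
  rw [Ideal.mem_span_singleton, ← h.coe_dvd_coe, Ideal.mem_comap]
  exact ⟨fun hr => (h.isMark c hc).dvd_of_mem c.2 (Set.mem_insert _ _) r r.2 (hP hr),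
    fun hr => P.mem_of_dvd hr hcP⟩

theorem IsMarkedSubring.exists_ltSeries_comap_eq_span (h : IsMarkedSubring k R M)
    {c : T × Ideal T} (hc : c ∈ M) :
    ∃ l : LTSeries (PrimeSpectrum T), l.length = k ∧
      ∀ i, (l i).asIdeal.comap R.subtype = Ideal.span {⟨c.1, (h.isMark c hc).mem⟩} := by
  obtain ⟨l, hl, hhead, hlast⟩ := (h.isChainTop c hc).exists_ltSeries
  exact ⟨l, hl, fun i => h.comap_eq_span hc (LTSeries.monotone l (Fin.zero_le i) hhead)
    (hlast ▸ LTSeries.monotone l (Fin.le_last i))⟩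

theorem IsMarkedSubring.exists_ltSeries_comap_eq_bot (h : IsMarkedSubring k R M) :
    ∃ l : LTSeries (PrimeSpectrum T), l.length = k ∧
      ∀ i, (l i).asIdeal.comap R.subtype = ⊥ := by
  obtain ⟨c, hc, hc0⟩ := h.exists_fst_eq_zero
  have hspan : Ideal.span {(⟨c.1, (h.isMark c hc).mem⟩ : R)} = ⊥ :=
    Ideal.span_singleton_eq_bot.2 (Subtype.ext hc0)
  exact hspan ▸ h.exists_ltSeries_comap_eq_span hc

theorem IsFullyMarkedSubring.exists_fst_mem (h : IsFullyMarkedSubring k R M) {p : Ideal R}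
    [hp : p.IsPrime] (hp0 : p ≠ ⊥) :
    ∃ c, ∃ hc : c ∈ M, c.1 ≠ 0 ∧ (⟨c.1, (h.isMark c hc).mem⟩ : R) ∈ p := by
  have := h.isDomain
  have := h.uniqueFactorizationMonoid
  obtain ⟨r, hrp, hr⟩ := hp.exists_mem_prime_of_ne_bot hp0
  have hr0 : (r : T) ≠ 0 := fun h0 => hr.ne_zero (Subtype.ext h0)
  obtain ⟨c, hc, hcr⟩ := h.exists_fst_dvd r r.2 hr0 (h.mem_maximalIdeal_iff.2 hr.not_isUnit)
  have hc0 : c.1 ≠ 0 := ne_zero_of_dvd_ne_zero hr0 hcr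
  exact ⟨c, hc, hc0, p.mem_of_dvd
    ((h.prime_fst hc hc0).associated_of_dvd hr (h.coe_dvd_coe.1 hcr)).dvd' hrp⟩

theorem IsFullyMarkedSubring.exists_eq_span_of_height_eq_one [IsNoetherianRing R]
    (h : IsFullyMarkedSubring k R M) {p : Ideal R} [p.IsPrime] (hp : p.height = 1) :
    ∃ c, ∃ hc : c ∈ M, c.1 ≠ 0 ∧ p = Ideal.span {⟨c.1, (h.isMark c hc).mem⟩} := by
  have := h.isDomain
  have hp0 : p ≠ ⊥ := by
    rintro rfl
    simp at hp
  obtain ⟨c, hc, hc0, hcp⟩ := h.exists_fst_mem hp0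
  have hprime := h.prime_fst hc hc0
  have : (Ideal.span {(⟨c.1, (h.isMark c hc).mem⟩ : R)}).IsPrime :=
    (Ideal.span_singleton_prime hprime.ne_zero).2 hprime
  refine ⟨c, hc, hc0, .symm (Ideal.eq_of_le_of_height_le _
    (p.span_singleton_le_iff_mem.2 hcp) (hp.trans_le ?_))⟩
  exact Ideal.one_le_height_span_singleton_of_mem_nonZeroDivisors
    (mem_nonZeroDivisors_of_ne_zero hprime.ne_zero)

end FormalFibers

theorem exists_forall_sum_range_sub_mem_pow {A : Type*} [CommRing A] {I : Ideal A}
    [IsPrecomplete I A] {y : ℕ → A} (hy : ∀ n, y n ∈ I ^ n) :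
    ∃ a, ∀ n, ∑ i ∈ Finset.range n, y i - a ∈ I ^ n := by
  obtain ⟨a, ha⟩ := IsPrecomplete.prec' (I := I) (M := A) (fun n => ∑ i ∈ Finset.range n, y i)
    fun {m n} hmn => by
      rw [SModEq.comm, SModEq.sub_mem, smul_eq_mul, Ideal.mul_top,
        ← Finset.sum_sdiff (Finset.range_mono hmn), add_sub_cancel_right]
      refine sum_mem fun i hi => Ideal.pow_le_pow_right ?_ (hy i)
      simpa using (Finset.mem_sdiff.1 hi).2
  refine ⟨a, fun n => ?_⟩
  simpa only [SModEq.sub_mem, smul_eq_mul, Ideal.mul_top] using ha n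

theorem aleph0_lt_mk_of_forall_pow_succ_ne {A : Type u} [CommRing A] (I : Ideal A)
    [IsPrecomplete I A] (hI : ∀ n, I ^ (n + 1) ≠ I ^ n) : ℵ₀ < #A := by
  choose y hy hy' using fun n => SetLike.exists_of_lt
    ((Ideal.pow_le_pow_right n.le_succ).lt_of_ne (hI n))
  have hmem (s : Set ℕ) (n : ℕ) : s.indicator y n ∈ I ^ n := by
    by_cases h : n ∈ s <;> simp [h, hy]
  choose f hf using fun s : Set ℕ => exists_forall_sum_range_sub_mem_pow (hmem s)
  have hinj : Function.Injective f := fun s t hst => by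
    ext n
    induction n using Nat.strong_induction_on with
    | _ n ih =>
    have hsum : ∑ i ∈ Finset.range n, s.indicator y i = ∑ i ∈ Finset.range n, t.indicator y i :=
      Finset.sum_congr rfl fun i hi => by
        classical simp only [Set.indicator_apply, ih i (Finset.mem_range.1 hi)]
    have hdiff : s.indicator y n - t.indicator y n ∈ I ^ (n + 1) := by
      have := sub_mem (hf s (n + 1)) (hst ▸ hf t (n + 1))
      rwa [Finset.sum_range_succ, Finset.sum_range_succ, hsum, sub_sub_sub_cancel_right,
        add_sub_add_left_eq_sub] at this
    by_cases hs : n ∈ s <;> by_cases ht : n ∈ t <;> simp [hs, ht, hy'] at hdiff ⊢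
  have := lift_mk_le_lift_mk_of_injective hinj
  rw [mk_set, lift_power, lift_two, mk_nat, lift_aleph0, lift_uzero] at this
  exact (cantor ℵ₀).trans_le this

theorem aleph0_lt_mk_of_ringKrullDim_pos {T : Type u} [CommRing T] [IsLocalRing T]
    [IsNoetherianRing T] [IsPrecomplete (maximalIdeal T) T] (hT : 0 < ringKrullDim T) :
    ℵ₀ < #T := by
  refine aleph0_lt_mk_of_forall_pow_succ_ne (maximalIdeal T) fun n hn => hT.not_ge ?_
  have hbot : maximalIdeal T ^ n = ⊥ := Submodule.eq_bot_of_le_smul_of_le_jacobson_bot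
    (maximalIdeal T) _ (IsNoetherian.noetherian _) (by rw [smul_eq_mul, ← pow_succ', hn])
    (maximalIdeal_le_jacobson _)
  have : IsArtinianRing T := isArtinianRing_iff_isNilpotent_maximalIdeal T |>.2 ⟨n, hbot⟩
  exact Order.krullDim_nonpos_of_subsingleton

theorem idealHt_eq_height {T : Type*} [CommRing T] (p : Ideal T) [hp : p.IsPrime] :
    idealHt p = p.height := by
  refine .trans ?_ (PrimeSpectrum.height_eq_orderHeight ⟨p, hp⟩).symm
  exact le_antisymm (iInf₂_le (⟨p, hp⟩ : PrimeSpectrum T) le_rfl)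
    (le_iInf₂ fun q hq => Order.height_mono (show (⟨p, hp⟩ : PrimeSpectrum T) ≤ q from hq))

theorem exists_hasBoundedAssociatedPrimes {T : Type*} [CommRing T] [IsLocalRing T]
    [IsNoetherianRing T] {k : ℕ} (hk : ((k + 1 : ℕ) : WithBot ℕ∞) + 1 ≤ ringKrullDim T)
    (hAss : ∀ P ∈ associatedPrimes T T, idealHt P ≤ k)
    (hreg : ∀ z ∈ nonZeroDivisors T, ∀ P ∈ associatedPrimes T (T ⧸ Ideal.span {z}),
      idealHt P ≤ (k + 1 : ℕ)) :
    ∃ n, HasBoundedAssociatedPrimes T k n := by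
  have hbot : Ideal.span {(0 : T)} = ⊥ := Ideal.span_singleton_eq_bot.2 rfl
  obtain ⟨n, hn⟩ : ∃ n : ℕ, ringKrullDim T = n :=
    ⟨_, Order.krullDim_eq_length_of_finiteDimensionalOrder⟩
  refine ⟨n, hn, ?_, fun P hP => ?_, fun z hz P hP => ?_⟩
  · rw [hn] at hk
    exact_mod_cast hk
  · have := hP.isPrime
    rw [hbot] at hP
    rw [← idealHt_eq_height]
    exact hAss P
      ((LinearEquiv.AssociatedPrimes.eq (AlgEquiv.quotientBot T T).toLinearEquiv).subset hP)
  · have := hP.isPrime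
    rw [← idealHt_eq_height]
    exact hreg z hz P hP

section FormalFibersOfSubring

variable {T : Type u} [CommRing T] [IsLocalRing T] [IsNoetherianRing T]
  [IsAdicComplete (maximalIdeal T) T] {k : ℕ} {R : Subring T} {M : Set (T × Ideal T)}

/-- The local unique factorization domain carried by a fully marked and exhaustive subring of `T`,
together with its inclusion into its completion `T`. -/
noncomputable def IsFullyMarkedSubring.localUFDWithCompletion (h : IsFullyMarkedSubring k R M)
    (hR : IsExhaustive k R) : LocalUFDWithCompletion T :=
  have := h.isDomain
  have := h.isLocalHom_subtype
  have := h.isLocalRing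
  have := hR.isNoetherianRing
  have := h.uniqueFactorizationMonoid
  let e := hR.nonempty_adicCompletion_algEquiv.some
  { A := R
    toCompletion := R.subtype
    completionEquiv := e.toRingEquiv
    completionEquiv_comp := e.commutes }

theorem alphaAt_bot_localUFDWithCompletion (h : IsFullyMarkedSubring k R M)
    (hR : IsExhaustive k R) :
    alphaAt (h.localUFDWithCompletion hR) ⊥ Ideal.isPrime_bot = k :=
  alphaAt_eq _ _ h.exists_ltSeries_comap_eq_bot hR.length_le_of_comap_eq_bot

theorem alphaAt_localUFDWithCompletion_of_height_eq_one (h : IsFullyMarkedSubring k R M)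
    (hR : IsExhaustive k R) {p : Ideal R} (hp : p.IsPrime)
    (hp1 : p.height = 1) : alphaAt (h.localUFDWithCompletion hR) p hp = k := by
  have := hR.isNoetherianRing
  obtain ⟨c, hc, hc0, rfl⟩ := h.exists_eq_span_of_height_eq_one hp1
  have hcR := (h.isMark c hc).mem
  exact alphaAt_eq _ hp (h.exists_ltSeries_comap_eq_span hc)
    (hR.length_le_of_comap_eq_span (p := ⟨c.1, hcR⟩) (h.mem_nonZeroDivisors hcR hc0)
      (h.isChainTop c hc).mem_maximalIdeal)

end FormalFibersOfSubring

theorem exists_local_UFD_formal_fibers_eq_general {T : Type u} [CommRing T] [IsLocalRing T]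
    [IsNoetherianRing T] [IsAdicComplete (maximalIdeal T) T]
    (hint : ∀ n : ℤ, n ≠ 0 → ((n : ℤ) : T) ∈ nonZeroDivisors T)
    (hcard : #T = #(ResidueField T))
    (d : ℕ) (hd1 : 1 ≤ d) (hd2 : (d : WithBot ℕ∞) + 1 ≤ ringKrullDim T)
    (hAss : ∀ p ∈ associatedPrimes T T, idealHt p ≤ ((d - 1 : ℕ) : ℕ∞))
    (hreg : ∀ z ∈ nonZeroDivisors T, ∀ Q ∈ associatedPrimes T (T ⧸ Ideal.span {z}),
      idealHt Q ≤ (d : ℕ∞)) :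
    ∃ X : LocalUFDWithCompletion T,
      alphaAt X ⊥ Ideal.isPrime_bot = ((d - 1 : ℕ) : WithBot ℕ∞) ∧
      ∀ (p : Ideal X.A) (hp : p.IsPrime), idealHt p = 1 →
        alphaAt X p hp = ((d - 1 : ℕ) : WithBot ℕ∞) := by
  obtain ⟨k, rfl⟩ := Nat.exists_eq_add_of_le' hd1
  rw [Nat.add_sub_cancel] at hAss ⊢
  obtain ⟨n, hT⟩ := exists_hasBoundedAssociatedPrimes hd2 hAss hreg
  have hpos : 0 < ringKrullDim T := by
    rw [hT.ringKrullDim_eq]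
    exact_mod_cast (Nat.succ_pos _).trans_le hT.add_two_le
  have hκ : ℵ₀ < #(ResidueField T) := hcard ▸ aleph0_lt_mk_of_ringKrullDim_pos hpos
  obtain ⟨R, M, hRM, hR⟩ := hT.exists_isExhaustive hint hκ hcard
  exact ⟨hRM.localUFDWithCompletion hR, alphaAt_bot_localUFDWithCompletion hRM hR,
    fun p hp hp1 => alphaAt_localUFDWithCompletion_of_height_eq_one hRM hR hp
      ((idealHt_eq_height p).symm.trans hp1)⟩

/-- **Corollary.** Let `(T, m)` be a complete local equidimensional ring with
`dim T ≥ 2`, no integer of `T` a zerodivisor, `depth T > 1` and `|T| = |T/m|`. Let `d`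
be an integer with `1 ≤ d ≤ dim T − 1`, assume `ht p ≤ d − 1` for every `p ∈ Ass T` and
`ht Q ≤ d` whenever `z ∈ T` is regular and `Q ∈ Ass(T/zT)`. Then there is a local UFD
`A` whose completion is `T` with `α(A, pA) = α(A, (0)) = d − 1` for every height one
prime ideal `pA` of `A`. -/
theorem exists_local_UFD_formal_fibers_eq {T : Type u} [CommRing T] [IsLocalRing T]
    [IsNoetherianRing T] [IsAdicComplete (maximalIdeal T) T]
    (hequi : IsEquidim T) (hdim : 2 ≤ ringKrullDim T) (hdepth : DepthGTOne T)
    (hint : ∀ n : ℤ, n ≠ 0 → ((n : ℤ) : T) ∈ nonZeroDivisors T)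
    (hcard : #T = #(ResidueField T))
    (d : ℕ) (hd1 : 1 ≤ d) (hd2 : (d : WithBot ℕ∞) + 1 ≤ ringKrullDim T)
    (hAss : ∀ p ∈ associatedPrimes T T, idealHt p ≤ ((d - 1 : ℕ) : ℕ∞))
    (hreg : ∀ z ∈ nonZeroDivisors T, ∀ Q ∈ associatedPrimes T (T ⧸ Ideal.span {z}),
      idealHt Q ≤ (d : ℕ∞)) :
    ∃ X : LocalUFDWithCompletion T,
      alphaAt X ⊥ Ideal.bot_prime = ((d - 1 : ℕ) : WithBot ℕ∞) ∧
      ∀ (p : Ideal X.A) (hp : p.IsPrime), idealHt p = 1 →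
        alphaAt X p hp = ((d - 1 : ℕ) : WithBot ℕ∞) :=
  exists_local_UFD_formal_fibers_eq_general hint hcard d hd1 hd2 hAss hreg
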